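/- arXiv:2403.05293 — 6 statements merged into one kernel-verified Lean document; each statement's English description precedes it below -/
import Mathlib

section
/- Let L be the quadratic loss of an overparametrised linear regression with nonempty interpolator set S, let λ > 0, and let θ : ℝ_{≥0} → ℝ^d be a twice continuously differentiable solution of λθ̈_t + θ̇_t + ∇L(θ_t) = 0 with θ(0) = θ₀ and θ̇(0) = θ̇₀. Then θ_t converges as t → ∞, and its limit is the unique minimiser of ‖θ* − (θ₀ + λθ̇₀)‖₂ over θ* ∈ S, i.e., the orthogonal projection of the effective initialisation θ₀ + λθ̇₀ onto the affine set S. -/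
open Real Filter

open scoped RealInnerProductSpace

/-!
Along the flow `w = θ + λθ̇` satisfies `ẇ = -∇L(θ)`. For least squares, `∇L` takes values in the
orthogonal complement of the kernel `K` of the design map, so the component of `w` along `K` is
conserved; it is the projection of the effective initialisation onto `K`. After translating by the
candidate limit, `w` stays in `Kᗮ`, where the Hessian `A` of `L` has a spectral gap. There the sum
of `‖u + λu̇‖²/2 + λ⟪Au, u⟫/2` and the mechanical energy `λ‖u̇‖²/2 + ⟪Au, u⟫/2` has derivative
`-(‖u̇‖² + ⟪Au, u⟫)` and is bounded by a multiple of this dissipation, hence decays exponentially.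
-/

section

open scoped Topology InnerProduct

lemma le_mul_exp_of_hasDerivWithinAt_le {f f' : ℝ → ℝ} {k : ℝ}
    (hf : ∀ t, 0 ≤ t → HasDerivWithinAt f (f' t) (Set.Ici 0) t)
    (hf' : ∀ t, 0 ≤ t → f' t ≤ k * f t) {t : ℝ} (ht : 0 ≤ t) :
    f t ≤ f 0 * exp (k * t) := by
  have hgronwall := le_gronwallBound_of_liminf_deriv_right_le (f := f) (f' := f') (δ := f 0)
    (K := k) (ε := 0) (b := t)
    (fun s hs => ((hf s hs.1).mono Set.Icc_subset_Ici_self).continuousWithinAt)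
    (fun s hs r hr => ((hf s hs.1).mono (Set.Ici_subset_Ici.2 hs.1)).liminf_right_slope_le hr)
    le_rfl (fun s hs => by simpa using hf' s hs.1) t ⟨ht, le_rfl⟩
  simpa only [gronwallBound_ε0, sub_zero] using hgronwall

variable {E F : Type*} [NormedAddCommGroup E] [InnerProductSpace ℝ E]
  [NormedAddCommGroup F] [InnerProductSpace ℝ F]

lemma norm_starProjection_sub_lt {K : Submodule ℝ E} [K.HasOrthogonalProjection] (v : E) {k : E}
    (hk : k ∈ K) (hne : k ≠ K.starProjection v) : ‖K.starProjection v - v‖ < ‖k - v‖ := by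
  have horth : ⟪k - K.starProjection v, K.starProjection v - v⟫ = 0 := by
    rw [← neg_sub v, inner_neg_right, real_inner_comm, neg_eq_zero]
    exact K.starProjection_inner_eq_zero v _ (K.sub_mem hk (K.starProjection_apply_mem v))
  have hpythagoras := norm_add_sq_eq_norm_sq_add_norm_sq_real horth
  rw [sub_add_sub_cancel] at hpythagoras
  have hpos : 0 < ‖k - K.starProjection v‖ := norm_pos_iff.2 (sub_ne_zero.2 hne)
  nlinarith [norm_nonneg (k - v)]

/-- `θ` solves the momentum gradient flow `lam • θ̈ + θ̇ + g θ = 0` on `[0, ∞)` with force field `g`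
(the gradient of a loss), where `θ'` and `θ''` are its first and second derivatives, one-sided at
`0`. For `lam = 0` this is the gradient flow. -/
structure IsMomentumFlow (lam : ℝ) (g : E → E) (θ θ' θ'' : ℝ → E) : Prop where
  hasDerivWithinAt : ∀ t, 0 ≤ t → HasDerivWithinAt θ (θ' t) (Set.Ici 0) t
  hasDerivWithinAt_deriv : ∀ t, 0 ≤ t → HasDerivWithinAt θ' (θ'' t) (Set.Ici 0) t
  ode : ∀ t, 0 ≤ t → lam • θ'' t + θ' t + g (θ t) = 0

/-- Lyapunov function of the momentum flow of the quadratic potential `⟪A u, u⟫ / 2` at position `u`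
and velocity `v`: the second summand is the mechanical energy, and the first one controls the
effective position `u + lam • v`. -/
noncomputable def momentumEnergy (lam : ℝ) (A : E →L[ℝ] E) (u v : E) : ℝ :=
  (‖u + lam • v‖ ^ 2 + lam * ⟪A u, u⟫) / 2 + (lam * ‖v‖ ^ 2 + ⟪A u, u⟫) / 2

section Energy

variable {A : E →L[ℝ] E} {lam m : ℝ}

lemma inner_map_add_self_le (hA : A.IsPositive) (a b : E) :
    ⟪A (a + b), a + b⟫ ≤ 2 * ⟪A a, a⟫ + 2 * ⟪A b, b⟫ := by
  have hsub : 0 ≤ ⟪A (a - b), a - b⟫ := hA.inner_nonneg_left (a - b)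
  simp only [map_add, map_sub, inner_add_left, inner_add_right, inner_sub_left,
    inner_sub_right] at hsub ⊢
  linarith

lemma inner_map_self_le (A : E →L[ℝ] E) (v : E) : ⟪A v, v⟫ ≤ ‖A‖ * ‖v‖ ^ 2 :=
  calc
    ⟪A v, v⟫ ≤ ‖A v‖ * ‖v‖ := real_inner_le_norm _ _
    _ ≤ ‖A‖ * ‖v‖ * ‖v‖ := by gcongr; exact A.le_opNorm v
    _ = ‖A‖ * ‖v‖ ^ 2 := by ring

lemma momentumEnergy_le_mul_dissipation (hA : A.IsPositive) (hm : 0 < m) {u v : E}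
    (hgap : m * ‖u + lam • v‖ ^ 2 ≤ ⟪A (u + lam • v), u + lam • v⟫) :
    momentumEnergy lam A u v ≤
      ((1 + lam ^ 2 * ‖A‖) / m + (lam + 1) / 2) * (‖v‖ ^ 2 + ⟪A u, u⟫) := by
  have hAu : 0 ≤ ⟪A u, u⟫ := hA.inner_nonneg_left u
  have hAv : ⟪A (lam • v), lam • v⟫ ≤ lam ^ 2 * ‖A‖ * ‖v‖ ^ 2 := by
    simp only [map_smul, real_inner_smul_left, real_inner_smul_right]
    linarith [mul_le_mul_of_nonneg_left (inner_map_self_le A v) (sq_nonneg lam)]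
  have heffective : ‖u + lam • v‖ ^ 2 / 2 ≤ (⟪A u, u⟫ + lam ^ 2 * ‖A‖ * ‖v‖ ^ 2) / m := by
    rw [le_div_iff₀ hm]
    linarith [inner_map_add_self_le hA u (lam • v)]
  have hsplit : (⟪A u, u⟫ + lam ^ 2 * ‖A‖ * ‖v‖ ^ 2) / m ≤
      (1 + lam ^ 2 * ‖A‖) / m * (‖v‖ ^ 2 + ⟪A u, u⟫) := by
    rw [div_mul_eq_mul_div]
    gcongr
    have : 0 ≤ ‖v‖ ^ 2 + lam ^ 2 * ‖A‖ * ⟪A u, u⟫ := by positivity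
    linarith
  have hvelocity : 0 ≤ ‖v‖ ^ 2 := sq_nonneg _
  rw [momentumEnergy]
  linarith

lemma sq_norm_le_mul_momentumEnergy (hA : A.IsPositive) (hlam : 0 ≤ lam) (u v : E) :
    ‖u‖ ^ 2 ≤ 4 * (1 + lam) * momentumEnergy lam A u v := by
  have hAu : 0 ≤ ⟪A u, u⟫ := hA.inner_nonneg_left u
  have hnorm : ‖u‖ ≤ ‖u + lam • v‖ + lam * ‖v‖ := by
    simpa [norm_smul, abs_of_nonneg hlam] using norm_sub_le (u + lam • v) (lam • v)
  have hrest : 0 ≤ 2 * lam * ‖u + lam • v‖ ^ 2 + 2 * lam * ‖v‖ ^ 2 +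
      2 * (1 + lam) ^ 2 * ⟪A u, u⟫ := by positivity
  calc
    ‖u‖ ^ 2 ≤ (‖u + lam • v‖ + lam * ‖v‖) ^ 2 := by gcongr
    _ ≤ 2 * (‖u + lam • v‖ ^ 2 + (lam * ‖v‖) ^ 2) := add_sq_le
    _ ≤ 4 * (1 + lam) * momentumEnergy lam A u v := by
      rw [momentumEnergy]
      linarith

end Energy

namespace IsMomentumFlow

variable {lam : ℝ} {g : E → E} {θ θ' θ'' : ℝ → E}

lemma hasDerivWithinAt_add_smul_deriv (h : IsMomentumFlow lam g θ θ' θ'') {t : ℝ} (ht : 0 ≤ t) :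
    HasDerivWithinAt (fun s => θ s + lam • θ' s) (-g (θ t)) (Set.Ici 0) t := by
  refine ((h.hasDerivWithinAt t ht).add
    ((h.hasDerivWithinAt_deriv t ht).const_smul lam)).congr_deriv ?_
  rw [eq_neg_iff_add_eq_zero, ← h.ode t ht]
  abel

lemma inner_add_smul_deriv_eq (h : IsMomentumFlow lam g θ θ' θ'') {v : E} (hv : ∀ a, ⟪g a, v⟫ = 0)
    {t : ℝ} (ht : 0 ≤ t) : ⟪θ t + lam • θ' t, v⟫ = ⟪θ 0 + lam • θ' 0, v⟫ := by
  have hderiv : ∀ s, 0 ≤ s →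
      HasDerivWithinAt (fun s => ⟪θ s + lam • θ' s, v⟫) 0 (Set.Ici 0) s := fun s hs => by
    simpa [hv] using (h.hasDerivWithinAt_add_smul_deriv hs).inner ℝ (hasDerivWithinAt_const s _ v)
  exact constant_of_has_deriv_right_zero
    (fun s hs => ((hderiv s hs.1).mono Set.Icc_subset_Ici_self).continuousWithinAt)
    (fun s hs => (hderiv s hs.1).mono (Set.Ici_subset_Ici.2 hs.1)) t ⟨ht, le_rfl⟩

lemma sub_const (h : IsMomentumFlow lam g θ θ' θ'') (p : E) :
    IsMomentumFlow lam (fun a => g (a + p)) (fun t => θ t - p) θ' θ'' where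
  hasDerivWithinAt t ht := (h.hasDerivWithinAt t ht).sub_const p
  hasDerivWithinAt_deriv := h.hasDerivWithinAt_deriv
  ode t ht := by simpa using h.ode t ht

variable {A : E →L[ℝ] E} {m : ℝ} {u u' u'' : ℝ → E}

lemma hasDerivWithinAt_momentumEnergy (h : IsMomentumFlow lam A u u' u'')
    (hA : (A : E →ₗ[ℝ] E).IsSymmetric) {t : ℝ} (ht : 0 ≤ t) :
    HasDerivWithinAt (fun s => momentumEnergy lam A (u s) (u' s))
      (-(‖u' t‖ ^ 2 + ⟪A (u t), u t⟫)) (Set.Ici 0) t := by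
  have hpotential : HasDerivWithinAt (fun s => ⟪A (u s), u s⟫) (2 * ⟪A (u t), u' t⟫)
      (Set.Ici 0) t := by
    have hu := h.hasDerivWithinAt t ht
    refine ((A.hasFDerivAt.comp_hasDerivWithinAt t hu).inner ℝ hu).congr_deriv ?_
    have hsymm : ⟪A (u' t), u t⟫ = ⟪A (u t), u' t⟫ := (hA _ _).trans (real_inner_comm _ _)
    simp only [Function.comp_apply]
    rw [hsymm]
    ring
  have heffective := (h.hasDerivWithinAt_add_smul_deriv ht).norm_sq
  have hkinetic := (h.hasDerivWithinAt_deriv t ht).norm_sq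
  refine (((heffective.add (hpotential.const_mul lam)).div_const 2).add
    (((hkinetic.const_mul lam).add hpotential).div_const 2)).congr_deriv ?_
  have hforce : lam * ⟪u' t, u'' t⟫ = -‖u' t‖ ^ 2 - ⟪A (u t), u' t⟫ := by
    have hode : lam • u'' t = -u' t - A (u t) := by
      rw [eq_sub_iff_add_eq, eq_neg_iff_add_eq_zero, ← h.ode t ht]
      abel
    rw [← real_inner_smul_right, hode, inner_sub_right, inner_neg_right,
      real_inner_self_eq_norm_sq, real_inner_comm]
  have hwork : ⟪u t + lam • u' t, -A (u t)⟫ = -⟪A (u t), u t⟫ - lam * ⟪A (u t), u' t⟫ := by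
    rw [inner_neg_right, real_inner_comm, inner_add_right, real_inner_smul_right]
    ring
  linear_combination hwork + hforce

lemma momentumEnergy_le_mul_exp (h : IsMomentumFlow lam A u u' u'') (hA : A.IsPositive)
    (hlam : 0 ≤ lam) (hm : 0 < m)
    (hgap : ∀ t, 0 ≤ t →
      m * ‖u t + lam • u' t‖ ^ 2 ≤ ⟪A (u t + lam • u' t), u t + lam • u' t⟫)
    {t : ℝ} (ht : 0 ≤ t) :
    momentumEnergy lam A (u t) (u' t) ≤ momentumEnergy lam A (u 0) (u' 0) *
      exp (-((1 + lam ^ 2 * ‖A‖) / m + (lam + 1) / 2)⁻¹ * t) := by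
  refine le_mul_exp_of_hasDerivWithinAt_le
    (fun s hs => h.hasDerivWithinAt_momentumEnergy hA.isSymmetric hs) (fun s hs => ?_) ht
  rw [neg_mul, neg_le_neg_iff, inv_mul_le_iff₀ (by positivity)]
  exact momentumEnergy_le_mul_dissipation hA hm (hgap s hs)

lemma tendsto_zero (h : IsMomentumFlow lam A u u' u'') (hA : A.IsPositive) (hlam : 0 ≤ lam)
    (hm : 0 < m) (hgap : ∀ w ∈ A.kerᗮ, m * ‖w‖ ^ 2 ≤ ⟪A w, w⟫)
    (h0 : u 0 + lam • u' 0 ∈ A.kerᗮ) : Tendsto u atTop (𝓝 0) := by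
  have hmem : ∀ t, 0 ≤ t → u t + lam • u' t ∈ A.kerᗮ := fun t ht => by
    refine (Submodule.mem_orthogonal' _ _).2 fun v hv => ?_
    rw [h.inner_add_smul_deriv_eq (fun a => ?_) ht]
    · exact (Submodule.mem_orthogonal' _ _).1 h0 v hv
    · rw [hA.inner_left_eq_inner_right, show A v = 0 from hv, inner_zero_right]
  set k := ((1 + lam ^ 2 * ‖A‖) / m + (lam + 1) / 2)⁻¹
  have hk_pos : 0 < k := by positivity
  have hdecay : Tendsto (fun t => 4 * (1 + lam) *
      (momentumEnergy lam A (u 0) (u' 0) * exp (-k * t))) atTop (𝓝 0) := by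
    have hexp : Tendsto (fun t => exp (-k * t)) atTop (𝓝 0) :=
      tendsto_exp_atBot.comp (tendsto_id.const_mul_atTop_of_neg (neg_lt_zero.2 hk_pos))
    simpa using (hexp.const_mul (momentumEnergy lam A (u 0) (u' 0))).const_mul (4 * (1 + lam))
  have hsq : Tendsto (fun t => ‖u t‖ ^ 2) atTop (𝓝 0) := by
    refine tendsto_of_tendsto_of_tendsto_of_le_of_le' tendsto_const_nhds hdecay
      (Eventually.of_forall fun t => sq_nonneg _) ?_
    filter_upwards [eventually_ge_atTop 0] with t ht
    refine (sq_norm_le_mul_momentumEnergy hA hlam (u t) (u' t)).trans ?_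
    gcongr
    exact h.momentumEnergy_le_mul_exp hA hlam hm (fun s hs => hgap _ (hmem s hs)) ht
  exact tendsto_zero_iff_norm_tendsto_zero.2 (by simpa using hsq.sqrt)

lemma tendsto_starProjection_ker [CompleteSpace E] (h : IsMomentumFlow lam A u u' u'')
    (hA : A.IsPositive) (hlam : 0 ≤ lam) (hm : 0 < m)
    (hgap : ∀ w ∈ A.kerᗮ, m * ‖w‖ ^ 2 ≤ ⟪A w, w⟫) :
    Tendsto u atTop (𝓝 (A.ker.starProjection (u 0 + lam • u' 0))) := by
  set p := A.ker.starProjection (u 0 + lam • u' 0)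
  have hAp : A p = 0 := A.ker.starProjection_apply_mem _
  have hshift : IsMomentumFlow lam A (fun t => u t - p) u' u'' := by
    simpa only [map_add, hAp, add_zero] using h.sub_const p
  have h0 : u 0 - p + lam • u' 0 ∈ A.kerᗮ := by
    rw [sub_add_eq_add_sub]
    exact A.ker.sub_starProjection_mem_orthogonal _
  exact tendsto_sub_nhds_zero_iff.1 (hshift.tendsto_zero hA hlam hm hgap h0)

end IsMomentumFlow

section LeastSquares

lemma exists_pos_forall_mem_orthogonal_ker_le [CompleteSpace E] [CompleteSpace F] {T : E →L[ℝ] F}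
    (hT : IsClosed (T.range : Set F)) :
    ∃ m : ℝ, 0 < m ∧ ∀ w ∈ T.kerᗮ, m * ‖w‖ ^ 2 ≤ ‖T w‖ ^ 2 := by
  have hinj : Function.Injective (T ∘L T.kerᗮ.subtypeL) := by
    refine (injective_iff_map_eq_zero _).2 fun w hw => Subtype.ext ?_
    exact T.ker.orthogonal_disjoint.eq_bot.le ⟨hw, w.2⟩
  have hrange : Set.range (T ∘L T.kerᗮ.subtypeL) = T.range := by
    rw [← Submodule.map_eq_range_iff.2 T.ker.isCompl_orthogonal.symm.codisjoint]
    ext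
    simp
  obtain ⟨C, hC⟩ := ContinuousLinearMap.antilipschitz_of_injective_of_isClosed_range _ hinj
    (hrange ▸ hT)
  refine ⟨((C + 1 : ℝ) ^ 2)⁻¹, by positivity, fun w hw => ?_⟩
  rw [inv_mul_le_iff₀ (by positivity), ← mul_pow]
  gcongr
  calc
    ‖w‖ ≤ C * ‖T w‖ := by simpa using hC.le_mul_dist ⟨w, hw⟩ 0
    _ ≤ (C + 1) * ‖T w‖ := by gcongr; linarith

lemma hasGradientAt_leastSquares [CompleteSpace E] [CompleteSpace F] (c : ℝ) (T : E →L[ℝ] F)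
    (b : F) (θ : E) :
    HasGradientAt (fun θ => c / 2 * ‖b - T θ‖ ^ 2) (c • (T†) (T θ - b)) θ := by
  rw [hasGradientAt_iff_hasFDerivAt]
  refine ((T.hasFDerivAt.const_sub b).norm_sq.const_mul (c / 2)).congr_fderiv ?_
  ext v
  simp only [ContinuousLinearMap.comp_neg, neg_apply, smul_apply, ContinuousLinearMap.comp_apply,
    coe_innerSL_apply, nsmul_eq_mul, Nat.cast_ofNat, smul_eq_mul, map_smul,
    InnerProductSpace.toDual_apply_apply, ContinuousLinearMap.adjoint_inner_left, inner_sub_left]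
  ring

theorem IsMomentumFlow.tendsto_leastSquares [CompleteSpace E] [CompleteSpace F] {T : E →L[ℝ] F}
    (hT : IsClosed (T.range : Set F)) {c lam : ℝ} (hc : 0 < c) (hlam : 0 ≤ lam)
    {θ θ' θ'' : ℝ → E} (s : E)
    (h : IsMomentumFlow lam (fun a => c • (T†) (T a - T s)) θ θ' θ'') :
    Tendsto θ atTop (𝓝 (s + T.ker.starProjection (θ 0 + lam • θ' 0 - s))) := by
  set A : E →L[ℝ] E := c • (T† ∘L T) with hA
  have hA_pos : A.IsPositive :=
    (ContinuousLinearMap.isPositive_adjoint_comp_self T).smul_of_nonneg hc.le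
  have hA_ker : A.ker = T.ker := by
    rw [← T.ker_adjoint_comp_self]
    ext v
    simp [hA, hc.ne']
  obtain ⟨m, hm, hgap⟩ := exists_pos_forall_mem_orthogonal_ker_le hT
  have hA_gap : ∀ w ∈ A.kerᗮ, c * m * ‖w‖ ^ 2 ≤ ⟪A w, w⟫ := fun w hw => by
    have hAw : ⟪A w, w⟫ = c * ‖T w‖ ^ 2 := by
      simp [hA, real_inner_smul_left, ContinuousLinearMap.adjoint_inner_left]
    rw [hAw, mul_assoc]
    exact mul_le_mul_of_nonneg_left (hgap w (hA_ker ▸ hw)) hc.le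
  have hshift : IsMomentumFlow lam A (fun t => θ t - s) θ' θ'' := by
    simpa [hA, Function.comp_def] using! h.sub_const s
  have hlim := hshift.tendsto_starProjection_ker hA_pos hlam (mul_pos hc hm) hA_gap
  simpa [hA_ker, sub_add_eq_add_sub, add_comm s] using hlim.add_const s

end LeastSquares

section Regression

variable {ι : Type*}

/-- The design map `θ ↦ (⟪x i, θ⟫)ᵢ` of the inputs `x`, the design matrix when `E` is `ℝᵈ`. -/
noncomputable def designMap (x : ι → E) : E →L[ℝ] EuclideanSpace ℝ ι :=
  (EuclideanSpace.equiv ι ℝ).symm.toContinuousLinearMap ∘L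
    ContinuousLinearMap.pi fun i => innerSL ℝ (x i)

@[simp]
lemma designMap_apply (x : ι → E) (θ : E) (i : ι) : designMap x θ i = ⟪x i, θ⟫ := rfl

lemma sub_mem_ker_designMap_iff {x : ι → E} {y : ι → ℝ} {s θ : E} (hs : ∀ i, ⟪x i, s⟫ = y i) :
    θ - s ∈ (designMap x).ker ↔ ∀ i, ⟪x i, θ⟫ = y i := by
  simp [LinearMap.mem_ker, sub_eq_zero, PiLp.ext_iff, hs]

lemma isClosed_range_designMap [Finite ι] (x : ι → E) :
    IsClosed ((designMap x).range : Set (EuclideanSpace ℝ ι)) := by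
  cases nonempty_fintype ι
  exact Submodule.closed_of_finiteDimensional _

variable [Fintype ι]

/-- The quadratic loss of the linear regression with inputs `x` and outputs `y`: half the mean
squared error, and `0` when there are no data. -/
noncomputable def quadraticLoss (x : ι → E) (y : ι → ℝ) : E → ℝ := fun θ =>
  1 / (2 * (Fintype.card ι : ℝ)) * ∑ i, (y i - ⟪x i, θ⟫) ^ 2

lemma quadraticLoss_eq_norm_sq {x : ι → E} {y : ι → ℝ} {s : E} (hs : ∀ i, ⟪x i, s⟫ = y i) :
    quadraticLoss x y = fun θ =>
      1 / (Fintype.card ι : ℝ) / 2 * ‖designMap x s - designMap x θ‖ ^ 2 := by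
  ext θ
  have hcoeff : 1 / (2 * (Fintype.card ι : ℝ)) = 1 / (Fintype.card ι : ℝ) / 2 := by ring
  simp only [quadraticLoss, EuclideanSpace.norm_sq_eq, PiLp.sub_apply, designMap_apply, hs,
    norm_eq_abs, sq_abs, hcoeff]

variable [CompleteSpace E]

-- With no data, `1 / card ι` is the junk value `0`, but the gradient vanishes for any `c`.
lemma exists_pos_gradient_quadraticLoss_eq {x : ι → E} {y : ι → ℝ} {s : E}
    (hs : ∀ i, ⟪x i, s⟫ = y i) :
    ∃ c : ℝ, 0 < c ∧ gradient (quadraticLoss x y) =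
      fun θ => c • ((designMap x)†) (designMap x θ - designMap x s) := by
  have hgradient : gradient (quadraticLoss x y) = fun θ =>
      (1 / (Fintype.card ι : ℝ)) • ((designMap x)†) (designMap x θ - designMap x s) := by
    rw [quadraticLoss_eq_norm_sq hs]
    exact funext fun θ => (hasGradientAt_leastSquares _ _ _ θ).gradient
  cases isEmpty_or_nonempty ι
  · exact ⟨1, one_pos, by simp [hgradient, Subsingleton.elim _ (0 : EuclideanSpace ℝ ι)]⟩
  · exact ⟨1 / Fintype.card ι, by positivity, hgradient⟩

theorem stmt_3_general (x : ι → E) (y : ι → ℝ) (hne : ∃ s, ∀ i, ⟪x i, s⟫ = y i)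
    {lam : ℝ} (hlam : 0 ≤ lam) {θ θ' θ'' : ℝ → E}
    (h : IsMomentumFlow lam (gradient (quadraticLoss x y)) θ θ' θ'') :
    ∃ θlim : E, Tendsto θ atTop (𝓝 θlim) ∧ (∀ i, ⟪x i, θlim⟫ = y i) ∧
      ∀ θstar, (∀ i, ⟪x i, θstar⟫ = y i) → θstar ≠ θlim →
        ‖θlim - (θ 0 + lam • θ' 0)‖ < ‖θstar - (θ 0 + lam • θ' 0)‖ := by
  obtain ⟨s, hs⟩ := hne
  obtain ⟨c, hc, hgradient⟩ := exists_pos_gradient_quadraticLoss_eq hs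
  set K := (designMap x).ker
  set z := θ 0 + lam • θ' 0
  refine ⟨s + K.starProjection (z - s), ?_, ?_, fun θstar hθstar hθstar_ne => ?_⟩
  · exact (hgradient ▸ h).tendsto_leastSquares (isClosed_range_designMap x) hc hlam s
  · rw [← sub_mem_ker_designMap_iff hs, add_sub_cancel_left]
    exact K.starProjection_apply_mem _
  · have hlt := norm_starProjection_sub_lt (z - s) ((sub_mem_ker_designMap_iff hs).2 hθstar)
      (fun heq => hθstar_ne (by rw [← heq, add_sub_cancel]))
    rwa [sub_sub_sub_cancel_right, ← sub_add, sub_add_eq_add_sub, add_comm _ s] at hlt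

end Regression

end

/-- Momentum gradient flow `λθ̈ + θ̇ + ∇L(θ) = 0` over the quadratic loss of an
overparametrised linear regression (with nonempty interpolator set `S`), initialised at
`θ(0) = θ₀` with `θ̇(0) = θ̇₀`, converges and the limit is the unique minimiser over `S` of
`‖θ* − (θ₀ + λθ̇₀)‖₂`, i.e. the orthogonal projection of the effective initialisation
`θ₀ + λθ̇₀` onto `S`. -/
theorem stmt_3 {n d : ℕ}
    (x : Fin n → EuclideanSpace ℝ (Fin d)) (y : Fin n → ℝ)
    (L : EuclideanSpace ℝ (Fin d) → ℝ)
    (hL : L = fun θ => (1 / (2 * (n : ℝ))) * ∑ i, (y i - ⟪x i, θ⟫) ^ 2)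
    (S : Set (EuclideanSpace ℝ (Fin d)))
    (hS : S = {θ | ∀ i, ⟪x i, θ⟫ = y i})
    (hSne : S.Nonempty)
    (lam : ℝ) (hlam : 0 < lam)
    (θ θ' θ'' : ℝ → EuclideanSpace ℝ (Fin d))
    (hθ' : ∀ t, HasDerivAt θ (θ' t) t)
    (hθ'' : ∀ t, HasDerivAt θ' (θ'' t) t)
    (hcont : Continuous θ'')
    (hode : ∀ t, 0 ≤ t → lam • θ'' t + θ' t + gradient L (θ t) = 0)
    (θ₀ θ₀' : EuclideanSpace ℝ (Fin d)) (h0 : θ 0 = θ₀) (h0' : θ' 0 = θ₀') :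
    ∃ θlim : EuclideanSpace ℝ (Fin d),
      Tendsto θ atTop (nhds θlim) ∧ θlim ∈ S ∧
        ∀ θstar ∈ S, θstar ≠ θlim →
          ‖θlim - (θ₀ + lam • θ₀')‖ < ‖θstar - (θ₀ + lam • θ₀')‖ := by
  subst hL hS h0 h0'
  exact stmt_3_general x y hSne hlam.le ⟨fun t _ => (hθ' t).hasDerivWithinAt,
    fun t _ => (hθ'' t).hasDerivWithinAt, by unfold quadraticLoss; simpa using hode⟩
end

section
/- Consider momentum gradient flow on the 2-layer diagonal linear network with parameter λ > 0 and zero initial velocities u̇_0 = v̇_0 = 0. Then for all t ≥ 0, coordinatewise: u̇_t ⊙ u_t − v̇_t ⊙ v_t = ∫₀^t (u̇_s² − v̇_s²) e^{−(t−s)/λ} ds, and u_t² − v_t² = (u₀² − v₀²) + 2λ ∫₀^t (u̇_s² − v̇_s²)(1 − e^{−(t−s)/λ}) ds. -/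
open Real Filter intervalIntegral

open scoped RealInnerProductSpace

/-!
Write `p = u̇ u - v̇ v`. The two equations of motion carry the same force `g`, so multiplying the
first by `u`, the second by `v` and subtracting cancels it, and `p` solves the linear equation
`ṗ = q - p / λ` with `q = u̇² - v̇²`. Variation of constants gives the first identity. The second
follows from `(u² - v²)˙ = 2p` and the integrated equation `∫ p = λ (∫ q + p(0) - p(t))`. Only the
commutative product matters, so the argument runs in any commutative Banach algebra; for a
coordinate of the network the algebra is `ℝ` and `g` is that coordinate of `∇L(θ)`.
-/

section LinearRelaxation

open MeasureTheory Set

variable {E : Type*} [NormedAddCommGroup E] [NormedSpace ℝ E] [CompleteSpace E]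
  {φ φ' q : ℝ → E} {r a b : ℝ}

theorem integral_eq_sub_of_hasDerivWithinAt_Icc (hab : a ≤ b)
    (hφ : ∀ s ∈ Icc a b, HasDerivWithinAt φ (φ' s) (Icc a b) s)
    (hφ' : IntervalIntegrable φ' volume a b) :
    ∫ s in a..b, φ' s = φ b - φ a :=
  integral_eq_sub_of_hasDerivAt_of_le hab (fun s hs => (hφ s hs).continuousWithinAt)
    (fun s hs => (hφ s (Ioo_subset_Icc_self hs)).hasDerivAt (Icc_mem_nhds hs.1 hs.2)) hφ'

theorem hasDerivAt_exp_neg_sub_mul (r b s : ℝ) :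
    HasDerivAt (fun s => Real.exp (-(b - s) * r)) (Real.exp (-(b - s) * r) * r) s := by
  simpa using ((((hasDerivAt_id s).const_sub b).neg).mul_const r).exp

theorem eq_exp_smul_add_integral_of_hasDerivWithinAt (hab : a ≤ b)
    (hφ : ∀ s ∈ Icc a b, HasDerivWithinAt φ (q s - r • φ s) (Icc a b) s)
    (hq : IntervalIntegrable q volume a b) :
    φ b = Real.exp (-(b - a) * r) • φ a + ∫ s in a..b, Real.exp (-(b - s) * r) • q s := by
  have deriv_exp_smul : ∀ s ∈ Icc a b,
      HasDerivWithinAt (fun s => Real.exp (-(b - s) * r) • φ s)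
        (Real.exp (-(b - s) * r) • q s) (Icc a b) s := fun s hs =>
    ((hasDerivAt_exp_neg_sub_mul r b s).hasDerivWithinAt.smul (hφ s hs)).congr_deriv (by module)
  rw [integral_eq_sub_of_hasDerivWithinAt_Icc hab deriv_exp_smul
    (hq.continuousOn_smul (by fun_prop))]
  simp

theorem smul_integral_eq_of_hasDerivWithinAt (hab : a ≤ b)
    (hφ : ∀ s ∈ Icc a b, HasDerivWithinAt φ (q s - r • φ s) (Icc a b) s)
    (hq : IntervalIntegrable q volume a b) :
    r • ∫ s in a..b, φ s = (1 - Real.exp (-(b - a) * r)) • φ a +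
      ∫ s in a..b, (1 - Real.exp (-(b - s) * r)) • q s := by
  have exp_smul_integrable :
      IntervalIntegrable (fun s => Real.exp (-(b - s) * r) • q s) volume a b :=
    hq.continuousOn_smul (by fun_prop)
  have smul_φ_integrable : IntervalIntegrable (fun s => r • φ s) volume a b :=
    ContinuousOn.intervalIntegrable_of_Icc hab fun s hs =>
      (hφ s hs).continuousWithinAt.const_smul r
  calc r • ∫ s in a..b, φ s
      = (∫ s in a..b, q s) - ∫ s in a..b, (q s - r • φ s) := by
        rw [integral_sub hq smul_φ_integrable, intervalIntegral.integral_smul, sub_sub_cancel]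
    _ = (∫ s in a..b, q s) - (φ b - φ a) := by
        rw [integral_eq_sub_of_hasDerivWithinAt_Icc hab hφ (hq.sub smul_φ_integrable)]
    _ = (1 - Real.exp (-(b - a) * r)) • φ a +
          ((∫ s in a..b, q s) - ∫ s in a..b, Real.exp (-(b - s) * r) • q s) := by
        rw [eq_exp_smul_add_integral_of_hasDerivWithinAt hab hφ hq]
        module
    _ = (1 - Real.exp (-(b - a) * r)) • φ a +
          ∫ s in a..b, (1 - Real.exp (-(b - s) * r)) • q s := by
        simp only [sub_smul, one_smul, integral_sub hq exp_smul_integrable]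

end LinearRelaxation

section MomentumFlow

open MeasureTheory Set

variable {A : Type*} [NormedCommRing A] [NormedAlgebra ℝ A]
  {lam t : ℝ} {u v u' v' : ℝ → A} {S : Set ℝ}

theorem hasDerivWithinAt_sq_sub_sq (hu : HasDerivWithinAt u (u' t) S t)
    (hv : HasDerivWithinAt v (v' t) S t) :
    HasDerivWithinAt (fun s => u s ^ 2 - v s ^ 2) ((2 : ℝ) • (u' t * u t - v' t * v t)) S t := by
  refine ((hu.fun_pow 2).sub (hv.fun_pow 2)).congr_deriv ?_
  simp only [Nat.cast_ofNat, Nat.add_one_sub_one, pow_one]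
  algebra

theorem hasDerivWithinAt_velocity_mul_position_sub (hlam : lam ≠ 0) {u'' v'' g : A}
    (hu : HasDerivWithinAt u (u' t) S t) (hv : HasDerivWithinAt v (v' t) S t)
    (hu' : HasDerivWithinAt u' u'' S t) (hv' : HasDerivWithinAt v' v'' S t)
    (hodeu : lam • u'' + u' t + g * v t = 0) (hodev : lam • v'' + v' t + g * u t = 0) :
    HasDerivWithinAt (fun s => u' s * u s - v' s * v s)
      (u' t ^ 2 - v' t ^ 2 - lam⁻¹ • (u' t * u t - v' t * v t)) S t := by
  have force_cancels : lam • (u'' * u t - v'' * v t) = -(u' t * u t - v' t * v t) := by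
    linear_combination (norm := algebra) u t * hodeu - v t * hodev
  have acceleration_eq : u'' * u t - v'' * v t = -(lam⁻¹ • (u' t * u t - v' t * v t)) := by
    rw [← smul_neg, ← force_cancels, inv_smul_smul₀ hlam]
  refine ((hu'.mul hu).sub (hv'.mul hv)).congr_deriv ?_
  linear_combination acceleration_eq

theorem stmt_5_general [CompleteSpace A] (hlam : lam ≠ 0) {g u'' v'' : ℝ → A}
    (hu : ∀ s, 0 ≤ s → HasDerivWithinAt u (u' s) (Ici 0) s)
    (hv : ∀ s, 0 ≤ s → HasDerivWithinAt v (v' s) (Ici 0) s)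
    (hu' : ∀ s, 0 ≤ s → HasDerivWithinAt u' (u'' s) (Ici 0) s)
    (hv' : ∀ s, 0 ≤ s → HasDerivWithinAt v' (v'' s) (Ici 0) s)
    (hodeu : ∀ s, 0 ≤ s → lam • u'' s + u' s + g s * v s = 0)
    (hodev : ∀ s, 0 ≤ s → lam • v'' s + v' s + g s * u s = 0) (ht : 0 ≤ t) :
    (u' t * u t - v' t * v t =
        Real.exp (-t / lam) • (u' 0 * u 0 - v' 0 * v 0) +
          ∫ s in (0 : ℝ)..t, Real.exp (-(t - s) / lam) • (u' s ^ 2 - v' s ^ 2)) ∧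
      (u t ^ 2 - v t ^ 2 =
        (u 0 ^ 2 - v 0 ^ 2) +
          (2 * lam) • ((1 - Real.exp (-t / lam)) • (u' 0 * u 0 - v' 0 * v 0) +
            ∫ s in (0 : ℝ)..t, (1 - Real.exp (-(t - s) / lam)) • (u' s ^ 2 - v' s ^ 2))) := by
  have p_deriv : ∀ s ∈ Icc 0 t, HasDerivWithinAt (fun s => u' s * u s - v' s * v s)
      (u' s ^ 2 - v' s ^ 2 - lam⁻¹ • (u' s * u s - v' s * v s)) (Icc 0 t) s := fun s hs =>
    (hasDerivWithinAt_velocity_mul_position_sub hlam (hu s hs.1) (hv s hs.1) (hu' s hs.1)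
      (hv' s hs.1) (hodeu s hs.1) (hodev s hs.1)).mono Icc_subset_Ici_self
  have sq_deriv : ∀ s ∈ Icc 0 t, HasDerivWithinAt (fun s => u s ^ 2 - v s ^ 2)
      ((2 : ℝ) • (u' s * u s - v' s * v s)) (Icc 0 t) s := fun s hs =>
    (hasDerivWithinAt_sq_sub_sq (hu s hs.1) (hv s hs.1)).mono Icc_subset_Ici_self
  have q_integrable : IntervalIntegrable (fun s => u' s ^ 2 - v' s ^ 2) volume 0 t :=
    ContinuousOn.intervalIntegrable_of_Icc ht fun s hs =>
      (hasDerivWithinAt_sq_sub_sq (hu' s hs.1) (hv' s hs.1)).continuousWithinAt.mono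
        Icc_subset_Ici_self
  have p_integrable : IntervalIntegrable (fun s => u' s * u s - v' s * v s) volume 0 t :=
    ContinuousOn.intervalIntegrable_of_Icc ht fun s hs => (p_deriv s hs).continuousWithinAt
  have p_eq := eq_exp_smul_add_integral_of_hasDerivWithinAt ht p_deriv q_integrable
  have integral_p_eq := smul_integral_eq_of_hasDerivWithinAt ht p_deriv q_integrable
  have sq_eq := integral_eq_sub_of_hasDerivWithinAt_Icc ht sq_deriv (p_integrable.smul (2 : ℝ))
  simp only [sub_zero, ← div_eq_mul_inv] at p_eq integral_p_eq
  refine ⟨p_eq, ?_⟩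
  rw [← integral_p_eq, smul_smul, mul_inv_cancel_right₀ hlam, ← intervalIntegral.integral_smul,
    sq_eq, add_sub_cancel]

end MomentumFlow

theorem hasDerivWithinAt_euclideanSpace_apply {𝕜 ι : Type*} [RCLike 𝕜] [Fintype ι]
    {f : 𝕜 → EuclideanSpace 𝕜 ι} {f' : EuclideanSpace 𝕜 ι} {S : Set 𝕜} {t : 𝕜}
    (hf : HasDerivWithinAt f f' S t) (i : ι) : HasDerivWithinAt (fun s => f s i) (f' i) S t :=
  (EuclideanSpace.proj (𝕜 := 𝕜) i).hasFDerivAt.comp_hasDerivWithinAt t hf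

/-- For momentum gradient flow on the 2-layer diagonal linear network with
parameter `λ > 0` and zero initial velocities, for all `t ≥ 0`, coordinatewise,
`u̇_t⊙u_t − v̇_t⊙v_t = ∫₀^t (u̇_s² − v̇_s²) e^{−(t−s)/λ} ds` and
`u_t² − v_t² = (u₀² − v₀²) + 2λ∫₀^t (u̇_s² − v̇_s²)(1 − e^{−(t−s)/λ}) ds`. -/
theorem stmt_5 {n d : ℕ}
    (x : Fin n → EuclideanSpace ℝ (Fin d)) (y : Fin n → ℝ)
    (L : EuclideanSpace ℝ (Fin d) → ℝ)
    (hL : L = fun θ => (1 / (2 * (n : ℝ))) * ∑ i, (y i - ⟪x i, θ⟫) ^ 2)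
    (lam : ℝ) (hlam : 0 < lam)
    (u v u' v' u'' v'' : ℝ → EuclideanSpace ℝ (Fin d))
    (hu' : ∀ t, HasDerivAt u (u' t) t) (hv' : ∀ t, HasDerivAt v (v' t) t)
    (hu'' : ∀ t, HasDerivAt u' (u'' t) t) (hv'' : ∀ t, HasDerivAt v' (v'' t) t)
    (hcu : Continuous u'') (hcv : Continuous v'')
    (θ : ℝ → EuclideanSpace ℝ (Fin d)) (hθ : ∀ t i, θ t i = u t i * v t i)
    (hodeu : ∀ t, 0 ≤ t → ∀ i, lam * u'' t i + u' t i + gradient L (θ t) i * v t i = 0)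
    (hodev : ∀ t, 0 ≤ t → ∀ i, lam * v'' t i + v' t i + gradient L (θ t) i * u t i = 0)
    (hu0 : u' 0 = 0) (hv0 : v' 0 = 0) :
    ∀ t, 0 ≤ t → ∀ i,
      (u' t i * u t i - v' t i * v t i =
          ∫ s in (0 : ℝ)..t, (u' s i ^ 2 - v' s i ^ 2) * Real.exp (-(t - s) / lam)) ∧
        (u t i ^ 2 - v t i ^ 2 =
          (u 0 i ^ 2 - v 0 i ^ 2) +
            2 * lam *
              ∫ s in (0 : ℝ)..t,
                (u' s i ^ 2 - v' s i ^ 2) * (1 - Real.exp (-(t - s) / lam))) := by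
  intro t ht i
  simpa [hu0, hv0, mul_comm] using stmt_5_general hlam.ne'
    (fun s _ => hasDerivWithinAt_euclideanSpace_apply (hu' s).hasDerivWithinAt i)
    (fun s _ => hasDerivWithinAt_euclideanSpace_apply (hv' s).hasDerivWithinAt i)
    (fun s _ => hasDerivWithinAt_euclideanSpace_apply (hu'' s).hasDerivWithinAt i)
    (fun s _ => hasDerivWithinAt_euclideanSpace_apply (hv'' s).hasDerivWithinAt i)
    (fun s hs => hodeu s hs i) (fun s hs => hodev s hs i) ht
end

section
/- Consider momentum gradient flow on the 2-layer diagonal linear network with parameter λ > 0. Assume the trajectory (u_t, v_t) is bounded and converges to (u_∞, v_∞), that ẇ_{±,t} → 0 as t → ∞, that each coordinate of t ↦ ẇ_{±,t} is square-integrable on (0, ∞), and that Δ_∞ = |u_∞² − v_∞²| has strictly positive coordinates. Then the improper integral ∫₀^∞ ∇L(θ_t) dt := lim_{t→∞} ∫₀^t ∇L(θ_s) ds exists in ℝ^d, and consequently lim_{t→∞} ∫₀^t ∇L(θ_s) e^{−(t−s)/λ} ds = 0. -/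
open Real Filter MeasureTheory intervalIntegral

open scoped RealInnerProductSpace

/-!
Write `w = u + v`, so that `λẅ + ẇ + g ⊙ w = 0` with `g = ∇L(θ)`. Coordinatewise, and as soon as
`w ≠ 0`, the identity `g = -(λẅ + ẇ) / w = -(d/dt) (λẇ / w + log w) - λ (ẇ / w)²` expresses `∫ g`
through a convergent boundary term and the integral of `(ẇ / w)²`, which converges because `ẇ` is
square-integrable and `w` stays away from `0`. The limit of `w` is nonzero since
`Δ_∞ = |u_∞ + v_∞| |u_∞ - v_∞|`.

For the exponential average only the convergence of `G t = ∫₀ᵗ g` is needed: integrating by parts,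
`∫₀ᵗ k (t - s) g s ds = k 0 • G t + ∫₀ᵗ k' (t - s) G s ds` tends to
`(k 0 + ∫₀^∞ k') • G_∞ = (lim k) • G_∞`, which vanishes for `k r = exp (-r / λ)`.
-/

section

open Set Topology

section ContinuousOnIci

variable {E : Type*} [NormedAddCommGroup E]

theorem exists_norm_le_of_continuousOn_Ici_of_tendsto {f : ℝ → E} {a : ℝ} {c : E}
    (hf : ContinuousOn f (Ici a)) (hc : Tendsto f atTop (𝓝 c)) : ∃ C, ∀ t ∈ Ici a, ‖f t‖ ≤ C := by
  obtain ⟨T, hT⟩ := eventually_atTop.1 (hc.norm.eventually_lt_const (lt_add_one ‖c‖))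
  obtain ⟨C, hC⟩ := (isCompact_Icc (a := a) (b := T)).exists_bound_of_continuousOn
    (hf.mono Icc_subset_Ici_self)
  refine ⟨max C (‖c‖ + 1), fun t ht => ?_⟩
  rcases le_total t T with htT | hTt
  · exact (hC t ⟨ht, htT⟩).trans (le_max_left _ _)
  · exact (hT t hTt).le.trans (le_max_right _ _)

theorem intervalIntegrable_of_continuousOn_Ici {g : ℝ → E} {a x y : ℝ}
    (hg : ContinuousOn g (Ici a)) (hx : a ≤ x) (hy : a ≤ y) : IntervalIntegrable g volume x y :=
  (hg.mono fun _ hs => (le_min hx hy).trans hs.1).intervalIntegrable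

variable [NormedSpace ℝ E]

theorem continuousOn_Ici_intervalIntegral {g : ℝ → E} {a : ℝ}
    (hg : ContinuousOn g (Ici a)) : ContinuousOn (fun x => ∫ s in a..x, g s) (Ici a) := by
  intro t (ht : a ≤ t)
  have hat : uIcc a (t + 1) = Icc a (t + 1) := uIcc_of_le (by linarith)
  have hint : IntervalIntegrable g volume a (t + 1) :=
    intervalIntegrable_of_continuousOn_Ici hg le_rfl (by linarith)
  refine (continuousOn_primitive_interval' hint left_mem_uIcc t
    (hat ▸ ⟨ht, by linarith⟩)).mono_of_mem_nhdsWithin ?_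
  rw [hat, ← Ici_inter_Iic]
  exact inter_mem self_mem_nhdsWithin (mem_nhdsWithin_of_mem_nhds (Iic_mem_nhds (by linarith)))

theorem hasDerivAt_intervalIntegral_of_continuousOn_Ici [CompleteSpace E] {g : ℝ → E}
    {a t : ℝ} (hg : ContinuousOn g (Ici a)) (ht : a < t) :
    HasDerivAt (fun x => ∫ s in a..x, g s) (g t) t :=
  integral_hasDerivAt_right
    (intervalIntegrable_of_continuousOn_Ici hg le_rfl ht.le)
    ((hg.mono Ioi_subset_Ici_self).stronglyMeasurableAtFilter isOpen_Ioi t ht)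
    (hg.continuousAt (Ici_mem_nhds ht))

end ContinuousOnIci

section Convolution

variable {E : Type*} [NormedAddCommGroup E] [NormedSpace ℝ E]

theorem intervalIntegral_comp_sub_smul_eq_integral_indicator (k : ℝ → ℝ) (f : ℝ → E) {t : ℝ}
    (ht : 0 ≤ t) :
    ∫ s in (0 : ℝ)..t, k (t - s) • f s =
      ∫ r in Ioi (0 : ℝ), (Iic t).indicator (fun r => k r • f (t - r)) r := by
  have reflect := integral_comp_sub_left (a := 0) (b := t) (fun s => k (t - s) • f s) t
  simp only [sub_sub_cancel, sub_self, sub_zero] at reflect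
  rw [← reflect, setIntegral_indicator measurableSet_Iic, Ioi_inter_Iic, integral_of_le ht]

variable [CompleteSpace E]

theorem tendsto_intervalIntegral_comp_sub_smul {k : ℝ → ℝ} {f : ℝ → E} {c : E}
    (hk : IntegrableOn k (Ioi 0)) (hf : ContinuousOn f (Ici 0)) (hc : Tendsto f atTop (𝓝 c)) :
    Tendsto (fun t => ∫ s in (0 : ℝ)..t, k (t - s) • f s) atTop
      (𝓝 ((∫ r in Ioi 0, k r) • c)) := by
  obtain ⟨C, hC⟩ := exists_norm_le_of_continuousOn_Ici_of_tendsto hf hc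
  have meas (t : ℝ) : AEStronglyMeasurable
      ((Iic t).indicator fun r => k r • f (t - r)) (volume.restrict (Ioi 0)) := by
    have hft : ContinuousOn (fun r => f (t - r)) (Iic t) :=
      hf.comp (by fun_prop) fun _ hr => mem_Ici.2 (sub_nonneg.2 hr)
    rw [aestronglyMeasurable_indicator_iff measurableSet_Iic]
    exact hk.aestronglyMeasurable.restrict.smul
      ((hft.aestronglyMeasurable measurableSet_Iic).mono_measure
        (Measure.restrict_mono_measure Measure.restrict_le_self _))
  have bound (t r : ℝ) : ‖(Iic t).indicator (fun r => k r • f (t - r)) r‖ ≤ ‖k r‖ * C := by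
    have hC0 : 0 ≤ C := (norm_nonneg _).trans (hC 0 self_mem_Ici)
    rw [norm_indicator_eq_indicator_norm]
    refine indicator_apply_le' (fun hr => ?_) fun _ => by positivity
    rw [norm_smul]
    exact mul_le_mul_of_nonneg_left (hC _ (mem_Ici.2 (sub_nonneg.2 hr))) (norm_nonneg _)
  have pointwise (r : ℝ) : Tendsto (fun t => (Iic t).indicator (fun r => k r • f (t - r)) r) atTop
      (𝓝 (k r • c)) := by
    have hshift : Tendsto (fun t => f (t - r)) atTop (𝓝 c) :=
      hc.comp (tendsto_atTop_add_const_right _ (-r) tendsto_id)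
    refine (hshift.const_smul (k r)).congr' ?_
    filter_upwards [eventually_ge_atTop r] with t ht
    rw [indicator_of_mem (mem_Iic.2 ht)]
  have key := tendsto_integral_filter_of_dominated_convergence (fun r => ‖k r‖ * C)
    (.of_forall meas) (.of_forall fun t => .of_forall (bound t)) (hk.norm.mul_const C)
    (.of_forall pointwise)
  rw [_root_.integral_smul_const] at key
  refine key.congr' ?_
  filter_upwards [eventually_ge_atTop 0] with t ht
  exact (intervalIntegral_comp_sub_smul_eq_integral_indicator k f ht).symm

theorem intervalIntegral_comp_sub_smul_eq_add {k k' : ℝ → ℝ} {g : ℝ → E} {t : ℝ}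
    (hk : ContinuousOn k (Ici 0)) (hk' : ∀ r ∈ Ioi 0, HasDerivAt k (k' r) r)
    (hk'int : IntegrableOn k' (Ioi 0)) (hg : ContinuousOn g (Ici 0)) (ht : 0 ≤ t) :
    ∫ s in (0 : ℝ)..t, k (t - s) • g s =
      k 0 • (∫ s in (0 : ℝ)..t, g s) + ∫ s in (0 : ℝ)..t, k' (t - s) • ∫ r in (0 : ℝ)..s, g r := by
  have hsub : uIcc 0 t ⊆ Ici 0 := uIcc_of_le ht ▸ Icc_subset_Ici_self
  have hkt : ContinuousOn (fun s => k (t - s)) (uIcc 0 t) :=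
    hk.comp (by fun_prop) fun s hs => sub_nonneg.2 (uIcc_of_le ht ▸ hs).2
  have hkt' : ∀ s ∈ Ioo (min 0 t) (max 0 t), HasDerivAt (fun s => k (t - s)) (-k' (t - s)) s := by
    rw [min_eq_left ht, max_eq_right ht]
    exact fun s hs => (hk' (t - s) (sub_pos.2 hs.2)).comp_const_sub t s
  have hG' : ∀ s ∈ Ioo (min 0 t) (max 0 t),
      HasDerivAt (fun x => ∫ r in (0 : ℝ)..x, g r) (g s) s := by
    rw [min_eq_left ht]
    exact fun s hs => hasDerivAt_intervalIntegral_of_continuousOn_Ici hg hs.1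
  have hkt'int : IntervalIntegrable (fun s => -k' (t - s)) volume 0 t := by
    have hk'int_t : IntervalIntegrable k' volume 0 t :=
      (intervalIntegrable_iff_integrableOn_Ioc_of_le ht).2 (hk'int.mono_set Ioc_subset_Ioi_self)
    simpa using! (hk'int_t.comp_sub_left t).symm.neg
  rw [integral_smul_deriv_eq_deriv_smul_of_hasDerivAt hkt
    ((continuousOn_Ici_intervalIntegral hg).mono hsub) hkt' hG' hkt'int
    (intervalIntegrable_of_continuousOn_Ici hg le_rfl ht)]
  simp [sub_eq_add_neg]

theorem tendsto_intervalIntegral_comp_sub_smul_of_tendsto_intervalIntegral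
    {k k' : ℝ → ℝ} {κ : ℝ} {g : ℝ → E} {I : E} (hk : ContinuousOn k (Ici 0))
    (hk' : ∀ r ∈ Ioi 0, HasDerivAt k (k' r) r) (hk'int : IntegrableOn k' (Ioi 0))
    (hκ : Tendsto k atTop (𝓝 κ)) (hg : ContinuousOn g (Ici 0))
    (hI : Tendsto (fun t => ∫ s in (0 : ℝ)..t, g s) atTop (𝓝 I)) :
    Tendsto (fun t => ∫ s in (0 : ℝ)..t, k (t - s) • g s) atTop (𝓝 (κ • I)) := by
  have hlim := (hI.const_smul (k 0)).add
    (tendsto_intervalIntegral_comp_sub_smul hk'int (continuousOn_Ici_intervalIntegral hg) hI)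
  rw [integral_Ioi_of_hasDerivAt_of_tendsto (hk 0 self_mem_Ici) hk' hk'int hκ, ← add_smul,
    add_sub_cancel] at hlim
  refine hlim.congr' ?_
  filter_upwards [eventually_ge_atTop 0] with t ht
  exact (intervalIntegral_comp_sub_smul_eq_add hk hk' hk'int hg ht).symm

theorem tendsto_intervalIntegral_exp_smul_zero {lam : ℝ} (hlam : 0 < lam)
    {g : ℝ → E} {I : E} (hg : ContinuousOn g (Ici 0))
    (hI : Tendsto (fun t => ∫ s in (0 : ℝ)..t, g s) atTop (𝓝 I)) :
    Tendsto (fun t => ∫ s in (0 : ℝ)..t, exp (-(t - s) / lam) • g s) atTop (𝓝 0) := by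
  have hderiv (r : ℝ) : HasDerivAt (fun r => exp (-r / lam)) (exp (-r / lam) * (-1 / lam)) r :=
    ((hasDerivAt_id r).neg.div_const lam).exp
  have hint : IntegrableOn (fun r => exp (-r / lam) * (-1 / lam)) (Ioi 0) := by
    have hexp : IntegrableOn (fun r => exp (-r / lam)) (Ioi 0) := by
      simpa [div_eq_inv_mul] using exp_neg_integrableOn_Ioi 0 (inv_pos.2 hlam)
    exact hexp.mul_const _
  have hzero : Tendsto (fun r => exp (-r / lam)) atTop (𝓝 0) :=
    tendsto_exp_atBot.comp (tendsto_neg_atTop_atBot.atBot_div_const hlam)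
  simpa only [zero_smul] using tendsto_intervalIntegral_comp_sub_smul_of_tendsto_intervalIntegral
    (by fun_prop) (fun r _ => hderiv r) hint hzero hg hI

end Convolution

section DampedEquation

theorem hasDerivAt_const_mul_div_add_log {w w' : ℝ → ℝ} {w'' lam t : ℝ}
    (hw : HasDerivAt w (w' t) t) (hw' : HasDerivAt w' w'' t) (hne : w t ≠ 0) :
    HasDerivAt (fun s => lam * (w' s / w s) + log (w s))
      ((lam * w'' + w' t) / w t - lam * (w' t / w t) ^ 2) t := by
  refine (((hw'.div hw hne).const_mul lam).add (hw.log hne)).congr_deriv ?_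
  field_simp
  ring

theorem integrableOn_Ici_div_sq_of_tendsto {f w : ℝ → ℝ} {a c : ℝ} (hf : ContinuousOn f (Ici a))
    (hw : ContinuousOn w (Ici a)) (hne : ∀ t ∈ Ici a, w t ≠ 0) (hlim : Tendsto w atTop (𝓝 c))
    (hc : c ≠ 0) (hsq : IntegrableAtFilter (fun t => f t ^ 2) atTop) :
    IntegrableOn (fun t => (f t / w t) ^ 2) (Ici a) := by
  have hcont : ContinuousOn (fun t => (f t / w t) ^ 2) (Ici a) := (hf.div hw hne).pow 2
  refine (hcont.locallyIntegrableOn measurableSet_Ici).integrableOn_of_isBigO_atTop ?_ hsq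
  simpa only [div_eq_mul_inv, mul_pow, mul_one] using
    (Asymptotics.isBigO_refl (fun t => f t ^ 2) atTop).mul (((hlim.inv₀ hc).pow 2).isBigO_one ℝ)

theorem intervalIntegral_eq_sub_of_damped_ode {g w w' w'' : ℝ → ℝ} {a b lam : ℝ}
    (hw : ∀ t ∈ uIcc a b, HasDerivAt w (w' t) t) (hw' : ∀ t ∈ uIcc a b, HasDerivAt w' (w'' t) t)
    (hne : ∀ t ∈ uIcc a b, w t ≠ 0)
    (hode : ∀ t ∈ uIcc a b, lam * w'' t + w' t + g t * w t = 0)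
    (hg : IntervalIntegrable g volume a b)
    (hsq : IntervalIntegrable (fun t => (w' t / w t) ^ 2) volume a b) :
    ∫ t in a..b, g t =
      (lam * (w' a / w a) + log (w a)) - (lam * (w' b / w b) + log (w b)) -
        lam * ∫ t in a..b, (w' t / w t) ^ 2 := by
  have hderiv : ∀ t ∈ uIcc a b, HasDerivAt (fun s => lam * (w' s / w s) + log (w s))
      (-g t - lam * (w' t / w t) ^ 2) t := fun t ht => by
    have hquot : (lam * w'' t + w' t) / w t = -g t := by
      rw [div_eq_iff (hne t ht)]
      linarith [hode t ht]
    exact hquot ▸ hasDerivAt_const_mul_div_add_log (hw t ht) (hw' t ht) (hne t ht)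
  have hneg : IntervalIntegrable (fun t => -g t) volume a b := hg.neg
  have hFTC := integral_eq_sub_of_hasDerivAt hderiv (hneg.sub (hsq.const_mul lam))
  rw [intervalIntegral.integral_sub hneg (hsq.const_mul lam), intervalIntegral.integral_neg,
    intervalIntegral.integral_const_mul] at hFTC
  linarith

theorem exists_tendsto_intervalIntegral_of_damped_ode {g w w' w'' : ℝ → ℝ} {a lam c : ℝ}
    (hg : ContinuousOn g (Ici a)) (hw : ∀ t ∈ Ioi a, HasDerivAt w (w' t) t)
    (hw' : ∀ t ∈ Ioi a, HasDerivAt w' (w'' t) t)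
    (hode : ∀ t ∈ Ioi a, lam * w'' t + w' t + g t * w t = 0)
    (hlim : Tendsto w atTop (𝓝 c)) (hc : c ≠ 0) (hlim' : Tendsto w' atTop (𝓝 0))
    (hsq : IntegrableAtFilter (fun t => w' t ^ 2) atTop) :
    ∃ I, Tendsto (fun t => ∫ s in a..t, g s) atTop (𝓝 I) := by
  obtain ⟨b, hb⟩ := eventually_atTop.1 ((eventually_gt_atTop a).and (hlim.eventually_ne hc))
  have hba : Ici b ⊆ Ioi a := fun t ht => (hb t ht).1
  have hne : ∀ t ∈ Ici b, w t ≠ 0 := fun t ht => (hb t ht).2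
  have hq : IntegrableOn (fun t => (w' t / w t) ^ 2) (Ici b) := integrableOn_Ici_div_sq_of_tendsto
    (fun t ht => (hw' t (hba ht)).continuousAt.continuousWithinAt)
    (fun t ht => (hw t (hba ht)).continuousAt.continuousWithinAt) hne hlim hc hsq
  have hboundary : Tendsto (fun t => lam * (w' t / w t) + log (w t)) atTop
      (𝓝 (lam * (0 / c) + log c)) :=
    ((hlim'.div hlim hc).const_mul lam).add (hlim.log hc)
  have hq_lim := intervalIntegral_tendsto_integral_Ioi b (hq.mono_set Ioi_subset_Ici_self)
    tendsto_id
  refine ⟨_, (((hboundary.const_sub (lam * (w' b / w b) + log (w b))).sub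
    (hq_lim.const_mul lam)).const_add (∫ s in a..b, g s)).congr' ?_⟩
  filter_upwards [eventually_ge_atTop b] with t hbt
  have hsub : uIcc b t ⊆ Ici b := uIcc_of_le hbt ▸ Icc_subset_Ici_self
  have hab : a ≤ b := (hba self_mem_Ici).le
  have hat : a ≤ t := hab.trans hbt
  have hgi : IntervalIntegrable g volume b t := intervalIntegrable_of_continuousOn_Ici hg hab hat
  rw [← integral_add_adjacent_intervals (intervalIntegrable_of_continuousOn_Ici hg le_rfl hab) hgi]
  exact congrArg _ (intervalIntegral_eq_sub_of_damped_ode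
    (fun s hs => hw s (hba (hsub hs))) (fun s hs => hw' s (hba (hsub hs)))
    (fun s hs => hne s (hsub hs)) (fun s hs => hode s (hba (hsub hs)))
    hgi (hq.mono_set hsub).intervalIntegrable).symm

end DampedEquation

section EuclideanSpace

theorem tendsto_euclideanSpace_iff {ι α : Type*} {l : Filter α} {f : α → EuclideanSpace ℝ ι}
    {c : EuclideanSpace ℝ ι} : Tendsto f l (𝓝 c) ↔ ∀ i, Tendsto (fun t => f t i) l (𝓝 (c i)) := by
  rw [(PiLp.homeomorph 2 fun _ : ι => ℝ).isInducing.tendsto_nhds_iff]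
  exact tendsto_pi_nhds

variable {ι : Type*} [Fintype ι]

theorem hasDerivAt_euclideanSpace_apply {f : ℝ → EuclideanSpace ℝ ι} {f' : EuclideanSpace ℝ ι}
    {t : ℝ} (hf : HasDerivAt f f' t) (i : ι) : HasDerivAt (fun s => f s i) (f' i) t :=
  (PiLp.hasFDerivAt_apply 2 (f t) i).comp_hasDerivAt t hf

theorem exists_tendsto_intervalIntegral_of_apply {g : ℝ → EuclideanSpace ℝ ι} {a : ℝ}
    (hg : ContinuousOn g (Ici a))
    (h : ∀ i, ∃ I, Tendsto (fun t => ∫ s in a..t, g s i) atTop (𝓝 I)) :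
    ∃ I, Tendsto (fun t => ∫ s in a..t, g s) atTop (𝓝 I) := by
  choose I hI using h
  refine ⟨WithLp.toLp 2 I, tendsto_euclideanSpace_iff.2 fun i => (hI i).congr' ?_⟩
  filter_upwards [eventually_ge_atTop a] with t ht
  exact (EuclideanSpace.proj (𝕜 := ℝ) i).intervalIntegral_comp_comm
    (intervalIntegrable_of_continuousOn_Ici hg le_rfl ht)

end EuclideanSpace

section Gradient

variable {F : Type*} [NormedAddCommGroup F] [InnerProductSpace ℝ F]

theorem continuous_gradient [CompleteSpace F] {L : F → ℝ} (hL : ContDiff ℝ 1 L) :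
    Continuous (gradient L) :=
  (InnerProductSpace.toDual ℝ F).symm.continuous.comp (hL.continuous_fderiv one_ne_zero)

theorem contDiff_const_mul_sum_sub_inner_sq {σ : Type*} [Fintype σ] {k : WithTop ℕ∞} (c : ℝ)
    (x : σ → F) (y : σ → ℝ) : ContDiff ℝ k fun θ => c * ∑ i, (y i - ⟪x i, θ⟫) ^ 2 :=
  contDiff_const.mul <| ContDiff.sum fun _ _ =>
    (contDiff_const.sub (contDiff_const.inner ℝ contDiff_id)).pow 2

end Gradient

theorem add_ne_zero_of_abs_sq_sub_sq_pos {R : Type*} [CommRing R] [LinearOrder R]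
    [IsOrderedRing R] {a b : R} (h : 0 < |a ^ 2 - b ^ 2|) : a + b ≠ 0 :=
  left_ne_zero_of_mul (sq_sub_sq a b ▸ abs_pos.1 h)

theorem stmt_9_general {ι : Type*} [Fintype ι] {L : EuclideanSpace ℝ ι → ℝ}
    (hL : ContDiff ℝ 1 L) {lam : ℝ} (hlam : 0 < lam)
    {u v u' v' u'' v'' : ℝ → EuclideanSpace ℝ ι}
    (hu' : ∀ t, 0 ≤ t → HasDerivWithinAt u (u' t) (Ici 0) t)
    (hv' : ∀ t, 0 ≤ t → HasDerivWithinAt v (v' t) (Ici 0) t)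
    (hu'' : ∀ t, 0 ≤ t → HasDerivWithinAt u' (u'' t) (Ici 0) t)
    (hv'' : ∀ t, 0 ≤ t → HasDerivWithinAt v' (v'' t) (Ici 0) t)
    {θ : ℝ → EuclideanSpace ℝ ι} (hθ : ∀ t, 0 ≤ t → ∀ i, θ t i = u t i * v t i)
    (hodeu : ∀ t, 0 ≤ t → ∀ i, lam * u'' t i + u' t i + gradient L (θ t) i * v t i = 0)
    (hodev : ∀ t, 0 ≤ t → ∀ i, lam * v'' t i + v' t i + gradient L (θ t) i * u t i = 0)
    {wlim : EuclideanSpace ℝ ι} (hw : Tendsto (fun t => u t + v t) atTop (𝓝 wlim))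
    (hwlim : ∀ i, wlim i ≠ 0) (hw0 : Tendsto (fun t => u' t + v' t) atTop (𝓝 0))
    (hsq : ∀ i, IntegrableOn (fun t => (u' t i + v' t i) ^ 2) (Ioi (0 : ℝ))) :
    ∃ I : EuclideanSpace ℝ ι,
      Tendsto (fun t => ∫ s in (0 : ℝ)..t, gradient L (θ s)) atTop (𝓝 I) ∧
        Tendsto (fun t => ∫ s in (0 : ℝ)..t, exp (-(t - s) / lam) • gradient L (θ s))
          atTop (𝓝 0) := by
  have hθc : ContinuousOn θ (Ici 0) := by
    have huc : ContinuousOn u (Ici 0) := fun t ht => (hu' t ht).continuousWithinAt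
    have hvc : ContinuousOn v (Ici 0) := fun t ht => (hv' t ht).continuousWithinAt
    refine ContinuousOn.congr (f := fun t => WithLp.toLp 2 fun i => u t i * v t i) (by fun_prop) ?_
    exact fun t ht => PiLp.ext (hθ t ht)
  have hg : ContinuousOn (fun t => gradient L (θ t)) (Ici 0) :=
    (continuous_gradient hL).comp_continuousOn hθc
  have hderiv {f f' : ℝ → EuclideanSpace ℝ ι}
      (hf : ∀ t, 0 ≤ t → HasDerivWithinAt f (f' t) (Ici 0) t) (t) (ht : 0 < t) (i) :
      HasDerivAt (fun s => f s i) (f' t i) t :=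
    hasDerivAt_euclideanSpace_apply ((hf t ht.le).hasDerivAt (Ici_mem_nhds ht)) i
  obtain ⟨I, hI⟩ := exists_tendsto_intervalIntegral_of_apply hg fun i =>
    exists_tendsto_intervalIntegral_of_damped_ode (w := fun t => u t i + v t i)
      (w' := fun t => u' t i + v' t i) (w'' := fun t => u'' t i + v'' t i)
      (((EuclideanSpace.proj (𝕜 := ℝ) i).continuous).comp_continuousOn hg)
      (fun t ht => (hderiv hu' t ht i).add (hderiv hv' t ht i))
      (fun t ht => (hderiv hu'' t ht i).add (hderiv hv'' t ht i))
      (fun t ht => by linear_combination hodeu t (le_of_lt ht) i + hodev t (le_of_lt ht) i)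
      (tendsto_euclideanSpace_iff.1 hw i) (hwlim i) (tendsto_euclideanSpace_iff.1 hw0 i)
      ⟨_, Ioi_mem_atTop 0, hsq i⟩
  exact ⟨I, hI, tendsto_intervalIntegral_exp_smul_zero hlam hg hI⟩

end

/-- For MGF on the 2-layer diagonal linear network with `λ > 0`, if the
trajectory is bounded and converges, `ẇ_{±,t} → 0`, each coordinate of `ẇ_{±,t}` is
square-integrable on `(0,∞)`, and `Δ_∞` has strictly positive coordinates, then the improper
integral `∫₀^∞ ∇L(θ_t) dt = lim_{t→∞} ∫₀^t ∇L(θ_s) ds` exists, and consequently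
`∫₀^t ∇L(θ_s) e^{−(t−s)/λ} ds → 0` as `t → ∞`. -/
theorem stmt_9 {n d : ℕ}
    (x : Fin n → EuclideanSpace ℝ (Fin d)) (y : Fin n → ℝ)
    (L : EuclideanSpace ℝ (Fin d) → ℝ)
    (hL : L = fun θ => (1 / (2 * (n : ℝ))) * ∑ i, (y i - ⟪x i, θ⟫) ^ 2)
    (lam : ℝ) (hlam : 0 < lam)
    (u v u' v' u'' v'' : ℝ → EuclideanSpace ℝ (Fin d))
    (hu' : ∀ t, HasDerivAt u (u' t) t) (hv' : ∀ t, HasDerivAt v (v' t) t)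
    (hu'' : ∀ t, HasDerivAt u' (u'' t) t) (hv'' : ∀ t, HasDerivAt v' (v'' t) t)
    (hcu : Continuous u'') (hcv : Continuous v'')
    (θ : ℝ → EuclideanSpace ℝ (Fin d)) (hθ : ∀ t i, θ t i = u t i * v t i)
    (hodeu : ∀ t, 0 ≤ t → ∀ i, lam * u'' t i + u' t i + gradient L (θ t) i * v t i = 0)
    (hodev : ∀ t, 0 ≤ t → ∀ i, lam * v'' t i + v' t i + gradient L (θ t) i * u t i = 0)
    (hbdd : ∃ C : ℝ, ∀ t, 0 ≤ t → ‖u t‖ ≤ C ∧ ‖v t‖ ≤ C)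
    (ulim vlim : EuclideanSpace ℝ (Fin d))
    (hu : Tendsto u atTop (nhds ulim)) (hv : Tendsto v atTop (nhds vlim))
    (hwp0 : Tendsto (fun t => u' t + v' t) atTop (nhds 0))
    (hwm0 : Tendsto (fun t => u' t - v' t) atTop (nhds 0))
    (hsqp : ∀ i, IntegrableOn (fun t => (u' t i + v' t i) ^ 2) (Set.Ioi (0 : ℝ)))
    (hsqm : ∀ i, IntegrableOn (fun t => (u' t i - v' t i) ^ 2) (Set.Ioi (0 : ℝ)))
    (hΔ : ∀ i, 0 < |ulim i ^ 2 - vlim i ^ 2|) :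
    ∃ I : EuclideanSpace ℝ (Fin d),
      Tendsto (fun t => ∫ s in (0 : ℝ)..t, gradient L (θ s)) atTop (nhds I) ∧
        Tendsto (fun t => ∫ s in (0 : ℝ)..t, Real.exp (-(t - s) / lam) • gradient L (θ s))
          atTop (nhds (0 : EuclideanSpace ℝ (Fin d))) :=
  stmt_9_general (hL ▸ contDiff_const_mul_sum_sub_inner_sq _ x y) hlam
    (fun t _ => (hu' t).hasDerivWithinAt) (fun t _ => (hv' t).hasDerivWithinAt)
    (fun t _ => (hu'' t).hasDerivWithinAt) (fun t _ => (hv'' t).hasDerivWithinAt)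
    (fun t _ => hθ t) hodeu hodev (hu.add hv)
    (fun i => add_ne_zero_of_abs_sq_sub_sq_pos (hΔ i)) hwp0 hsqp
end

section
/- Let λ > 0, let g : ℝ_{≥0} → ℝ^d be continuous, and let f : ℝ_{≥0} → ℝ^d be differentiable with f(0) = 0 and λḟ(t) + f(t) + g(t) = 0 for all t ≥ 0. Then: (i) if g is bounded, so is f, with sup_{t≥0} ‖f(t)‖ ≤ sup_{t≥0} ‖g(t)‖; (ii) if each coordinate of g is absolutely integrable on (0, ∞), then ∫₀^t |f_i(s)| ds ≤ ∫₀^t |g_i(s)| ds for every coordinate i and every t ∈ [0, ∞]; (iii) under the same integrability assumption, lim_{t→∞} f(t) = 0; and (iv) under the same integrability assumption, ∫₀^∞ f(t) dt = −∫₀^∞ g(t) dt. -/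
open Real Filter MeasureTheory intervalIntegral

/-! The equation says that `-f` is the average of `g` over the past, weighted by the exponential
density `x ↦ λ⁻¹ exp (-x / λ)` of total mass one: averaging does not increase sup norms, and by
Tonelli it does not increase `L¹` norms, also on `[0, T]` since only the past of `g` enters.
Then `f` and `ḟ = -λ⁻¹ (f + g)` are both integrable, which forces `f → 0`, and
`∫ (f + g) = -λ ∫ ḟ = λ (f 0 - lim f) = 0`. -/

section Convolution

open Set

/-- Young's inequality `‖h ⋆ k‖₁ ≤ ‖h‖₁ ‖k‖₁` localizes to `[0, T]`, since there the one-sided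
convolution does not see `h` after time `T`. -/
theorem intervalIntegral_le_mul_integral_of_le_convolution {φ h k : ℝ → ℝ} {T : ℝ} (hT : 0 ≤ T)
    (hφ : IntervalIntegrable φ volume 0 T)
    (hh : IntervalIntegrable h volume 0 T) (h_nonneg : ∀ s, 0 ≤ h s)
    (hk : IntegrableOn k (Ioi 0)) (k_nonneg : ∀ s, 0 ≤ k s)
    (hle : ∀ x ∈ Ioc 0 T, φ x ≤ ∫ s in 0..x, h s * k (x - s)) :
    ∫ x in 0..T, φ x ≤ (∫ s in 0..T, h s) * ∫ s in Ioi 0, k s := by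
  set H : ℝ → ℝ := (Ioc 0 T).indicator h
  set P : ℝ → ℝ := fun x ↦ ∫ s in 0..x, H s * k (x - s)
  have H_nonneg (s : ℝ) : 0 ≤ H s := indicator_nonneg (fun s _ ↦ h_nonneg s) s
  have hH : IntegrableOn H (Ioi 0) :=
    ((integrable_indicator_iff measurableSet_Ioc).2 hh.1).integrableOn
  have hP : IntegrableOn P (Ioi 0) :=
    (integrable_indicator_iff measurableSet_Ioi).1
      (integrable_posConvolution hH hk (ContinuousLinearMap.mul ℝ ℝ))
  have P_nonneg : ∀ x ∈ Ioi (0 : ℝ), 0 ≤ P x := fun x hx ↦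
    integral_nonneg hx.le fun s _ ↦ mul_nonneg (H_nonneg s) (k_nonneg _)
  have φ_le_P : ∀ x ∈ Ioc 0 T, φ x ≤ P x := fun x hx ↦ by
    refine (hle x hx).trans_eq (integral_congr_ae (.of_forall fun s hs ↦ ?_))
    rw [uIoc_of_le hx.1.le] at hs
    have hsT : s ∈ Ioc 0 T := ⟨hs.1, hs.2.trans hx.2⟩
    simp only [H, indicator_of_mem hsT]
  calc ∫ x in 0..T, φ x
      = ∫ x in Ioc 0 T, φ x := integral_of_le hT
    _ ≤ ∫ x in Ioc 0 T, P x :=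
        setIntegral_mono_on hφ.1 (hP.mono_set Ioc_subset_Ioi_self) measurableSet_Ioc φ_le_P
    _ ≤ ∫ x in Ioi 0, P x :=
        setIntegral_mono_set hP (ae_restrict_of_forall_mem measurableSet_Ioi P_nonneg)
          Ioc_subset_Ioi_self.eventuallyLE
    _ = (∫ s in Ioi 0, H s) * ∫ s in Ioi 0, k s :=
        integral_posConvolution hH hk (ContinuousLinearMap.mul ℝ ℝ)
    _ = (∫ s in 0..T, h s) * ∫ s in Ioi 0, k s := by
        rw [setIntegral_indicator measurableSet_Ioc, inter_eq_right.2 Ioc_subset_Ioi_self,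
          integral_of_le hT]

end Convolution

/-- The impulse response of `λ ḟ + f`; on `(0, ∞)` it is the density of the exponential law
of mean `λ`. -/
noncomputable def expKernel (lam x : ℝ) : ℝ := lam⁻¹ * exp (-lam⁻¹ * x)

namespace expKernel

open Set

variable {lam : ℝ}

theorem nonneg (hlam : 0 < lam) (x : ℝ) : 0 ≤ expKernel lam x := by
  unfold expKernel
  positivity

theorem apply_sub (t s : ℝ) :
    expKernel lam (t - s) = exp (-(lam⁻¹ * t)) * (lam⁻¹ * exp (lam⁻¹ * s)) := by
  rw [expKernel, mul_left_comm, ← exp_add]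
  ring_nf

theorem integrableOn_Ioi (hlam : 0 < lam) : IntegrableOn (expKernel lam) (Ioi 0) :=
  (integrableOn_exp_mul_Ioi (neg_neg_of_pos (inv_pos.2 hlam)) 0).const_mul _

theorem integral_Ioi (hlam : 0 < lam) : ∫ x in Ioi 0, expKernel lam x = 1 := by
  simp only [expKernel]
  rw [MeasureTheory.integral_const_mul, integral_exp_mul_Ioi (neg_neg_of_pos (inv_pos.2 hlam))]
  simp [hlam.ne']

theorem intervalIntegral_le_one (hlam : 0 < lam) {t : ℝ} (ht : 0 ≤ t) :
    ∫ x in 0..t, expKernel lam x ≤ 1 := by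
  rw [integral_of_le ht, ← integral_Ioi hlam]
  exact setIntegral_mono_set (integrableOn_Ioi hlam) (.of_forall (nonneg hlam))
    Ioc_subset_Ioi_self.eventuallyLE

end expKernel

/-- `f` solves `λ ḟ + f + g = 0` on `[0, ∞)` with `f 0 = 0`, the equation being solved for `ḟ`.
The derivative at `0` is one-sided, so nothing is asked of `f` on the negative half-line. -/
structure IsRelaxation {E : Type*} [NormedAddCommGroup E] [NormedSpace ℝ E]
    (lam : ℝ) (g f : ℝ → E) : Prop where
  map_zero : f 0 = 0
  hasDerivWithinAt : ∀ t, 0 ≤ t → HasDerivWithinAt f (-lam⁻¹ • (f t + g t)) (Set.Ici 0) t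

namespace IsRelaxation

open Set Topology

variable {E F : Type*} [NormedAddCommGroup E] [NormedSpace ℝ E] [NormedAddCommGroup F]
  [NormedSpace ℝ F] {lam : ℝ} {f g : ℝ → E}

theorem of_smul_deriv_add {f' : ℝ → E} (hlam : lam ≠ 0)
    (hf' : ∀ t, 0 ≤ t → HasDerivWithinAt f (f' t) (Ici 0) t) (hf0 : f 0 = 0)
    (hode : ∀ t, 0 ≤ t → lam • f' t + f t + g t = 0) : IsRelaxation lam g f where
  map_zero := hf0
  hasDerivWithinAt t ht := by
    convert! hf' t ht using 1
    have hsum : f t + g t = -(lam • f' t) :=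
      eq_neg_of_add_eq_zero_right (by rw [← add_assoc, hode t ht])
    rw [hsum, neg_smul_neg, inv_smul_smul₀ hlam]

theorem clm_comp (h : IsRelaxation lam g f) (L : E →L[ℝ] F) :
    IsRelaxation lam (fun t ↦ L (g t)) (fun t ↦ L (f t)) where
  map_zero := by rw [h.map_zero, L.map_zero]
  hasDerivWithinAt t ht := by
    simpa only [map_smul, map_add] using!
      L.hasFDerivAt.comp_hasDerivWithinAt t (h.hasDerivWithinAt t ht)

theorem continuousOn (h : IsRelaxation lam g f) : ContinuousOn f (Ici 0) :=
  fun t ht ↦ (h.hasDerivWithinAt t ht).continuousWithinAt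

theorem continuousOn_uIcc (h : IsRelaxation lam g f) {t : ℝ} (ht : 0 ≤ t) :
    ContinuousOn f (uIcc 0 t) :=
  h.continuousOn.mono (uIcc_of_le ht ▸ Icc_subset_Ici_self)

theorem hasDerivAt (h : IsRelaxation lam g f) {t : ℝ} (ht : 0 < t) :
    HasDerivAt f (-lam⁻¹ • (f t + g t)) t :=
  (h.hasDerivWithinAt t ht.le).hasDerivAt (Ici_mem_nhds ht)

theorem hasDerivAt_exp_smul (h : IsRelaxation lam g f) {t : ℝ} (ht : 0 < t) :
    HasDerivAt (fun s ↦ exp (lam⁻¹ * s) • f s) (-(lam⁻¹ * exp (lam⁻¹ * t)) • g t) t := by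
  refine (((hasDerivAt_id' t).const_mul lam⁻¹).exp.smul (h.hasDerivAt ht)).congr_deriv ?_
  module

theorem norm_le_integral_mul_expKernel (h : IsRelaxation lam g f) (hlam : 0 < lam) {B : ℝ → ℝ}
    {t : ℝ} (ht : 0 ≤ t) (hB : IntervalIntegrable B volume 0 t)
    (hgB : ∀ s ∈ Ioo 0 t, ‖g s‖ ≤ B s) :
    ‖f t‖ ≤ ∫ s in 0..t, B s * expKernel lam (t - s) := by
  have hderiv : ∀ s ∈ Ioo 0 t,
      ‖deriv (fun s ↦ exp (lam⁻¹ * s) • f s) s‖ ≤ lam⁻¹ * exp (lam⁻¹ * s) * B s := fun s hs ↦ by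
    rw [(h.hasDerivAt_exp_smul hs.1).deriv, norm_smul, norm_neg, norm_of_nonneg (by positivity)]
    gcongr
    exact hgB s hs
  have hexp : exp (lam⁻¹ * t) * ‖f t‖ ≤ ∫ s in 0..t, lam⁻¹ * exp (lam⁻¹ * s) * B s := by
    simpa [h.map_zero, norm_smul] using
      norm_sub_le_integral_of_norm_deriv_le_of_le (f := fun s ↦ exp (lam⁻¹ * s) • f s) ht
        (ContinuousOn.smul (by fun_prop) (h.continuousOn.mono Icc_subset_Ici_self))
        (fun s hs ↦ (h.hasDerivAt_exp_smul hs.1).differentiableAt.differentiableWithinAt)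
        (.of_forall hderiv) (hB.continuousOn_mul (by fun_prop))
  calc ‖f t‖
      = exp (-(lam⁻¹ * t)) * (exp (lam⁻¹ * t) * ‖f t‖) := by
        rw [← mul_assoc, ← exp_add, neg_add_cancel, exp_zero, one_mul]
    _ ≤ exp (-(lam⁻¹ * t)) * ∫ s in 0..t, lam⁻¹ * exp (lam⁻¹ * s) * B s := by gcongr
    _ = ∫ s in 0..t, B s * expKernel lam (t - s) := by
        simp only [← intervalIntegral.integral_const_mul, ← mul_assoc,
          expKernel.apply_sub, mul_comm (B _)]

theorem norm_le_of_forall_norm_le (h : IsRelaxation lam g f) (hlam : 0 < lam) {C : ℝ}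
    (hC : ∀ t, 0 ≤ t → ‖g t‖ ≤ C) {t : ℝ} (ht : 0 ≤ t) : ‖f t‖ ≤ C :=
  calc ‖f t‖
      ≤ ∫ s in 0..t, C * expKernel lam (t - s) :=
        h.norm_le_integral_mul_expKernel hlam ht intervalIntegrable_const
          fun s hs ↦ hC s hs.1.le
    _ = C * ∫ s in 0..t, expKernel lam s := by simp
    _ ≤ C := mul_le_of_le_one_right ((norm_nonneg _).trans (hC 0 le_rfl))
        (expKernel.intervalIntegral_le_one hlam ht)

theorem intervalIntegral_norm_le (h : IsRelaxation lam g f) (hlam : 0 < lam) {t : ℝ} (ht : 0 ≤ t)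
    (hg : IntegrableOn g (Ioc 0 t)) : ∫ s in 0..t, ‖f s‖ ≤ ∫ s in 0..t, ‖g s‖ := by
  have hgt : IntervalIntegrable (‖g ·‖) volume 0 t :=
    (intervalIntegrable_iff_integrableOn_Ioc_of_le ht).2 hg.norm
  have hconv : ∀ x ∈ Ioc 0 t, ‖f x‖ ≤ ∫ s in 0..x, ‖g s‖ * expKernel lam (x - s) := fun x hx ↦
    h.norm_le_integral_mul_expKernel hlam hx.1.le
      (hgt.mono_set (uIcc_subset_uIcc_left (Icc_subset_uIcc (Ioc_subset_Icc_self hx))))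
      fun _ _ ↦ le_rfl
  simpa only [expKernel.integral_Ioi hlam, mul_one] using
    intervalIntegral_le_mul_integral_of_le_convolution ht
      (h.continuousOn_uIcc ht).norm.intervalIntegrable hgt (fun _ ↦ norm_nonneg _)
      (expKernel.integrableOn_Ioi hlam) (expKernel.nonneg hlam) hconv

theorem integrableOn_Ioi (h : IsRelaxation lam g f) (hlam : 0 < lam)
    (hg : IntegrableOn g (Ioi 0)) : IntegrableOn f (Ioi 0) := by
  refine integrableOn_Ioi_of_intervalIntegral_norm_bounded (∫ s in Ioi 0, ‖g s‖) 0
    (fun t ↦ ?_) tendsto_id ?_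
  · exact ((h.continuousOn.mono Icc_subset_Ici_self).integrableOn_Icc).mono_set Ioc_subset_Icc_self
  · filter_upwards [eventually_ge_atTop 0] with t ht
    calc ∫ s in 0..t, ‖f s‖
        ≤ ∫ s in 0..t, ‖g s‖ := h.intervalIntegral_norm_le hlam ht (hg.mono_set Ioc_subset_Ioi_self)
      _ = ∫ s in Ioc 0 t, ‖g s‖ := integral_of_le ht
      _ ≤ ∫ s in Ioi 0, ‖g s‖ := setIntegral_mono_set hg.norm
          (.of_forall fun _ ↦ norm_nonneg _) Ioc_subset_Ioi_self.eventuallyLE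

theorem integral_Ioi_norm_le (h : IsRelaxation lam g f) (hlam : 0 < lam)
    (hg : IntegrableOn g (Ioi 0)) : ∫ s in Ioi 0, ‖f s‖ ≤ ∫ s in Ioi 0, ‖g s‖ := by
  refine le_of_tendsto_of_tendsto
    (intervalIntegral_tendsto_integral_Ioi 0 (h.integrableOn_Ioi hlam hg).norm tendsto_id)
    (intervalIntegral_tendsto_integral_Ioi 0 hg.norm tendsto_id) ?_
  filter_upwards [eventually_ge_atTop 0] with t ht
  exact h.intervalIntegral_norm_le hlam ht (hg.mono_set Ioc_subset_Ioi_self)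

theorem integrableOn_Ioi_deriv (h : IsRelaxation lam g f) (hlam : 0 < lam)
    (hg : IntegrableOn g (Ioi 0)) : IntegrableOn (fun t ↦ -lam⁻¹ • (f t + g t)) (Ioi 0) :=
  ((h.integrableOn_Ioi hlam hg).add hg).smul (-lam⁻¹)

theorem tendsto_zero (h : IsRelaxation lam g f) (hlam : 0 < lam)
    (hg : IntegrableOn g (Ioi 0)) : Tendsto f atTop (𝓝 0) :=
  tendsto_zero_of_hasDerivAt_of_integrableOn_Ioi (fun _ ht ↦ h.hasDerivAt ht)
    (h.integrableOn_Ioi_deriv hlam hg) (h.integrableOn_Ioi hlam hg)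

theorem integral_Ioi_eq_neg [CompleteSpace E] (h : IsRelaxation lam g f) (hlam : 0 < lam)
    (hg : IntegrableOn g (Ioi 0)) : ∫ t in Ioi 0, f t = -∫ t in Ioi 0, g t := by
  have hderiv : ∫ t in Ioi 0, -lam⁻¹ • (f t + g t) = 0 - f 0 :=
    integral_Ioi_of_hasDerivAt_of_tendsto (h.continuousOn 0 self_mem_Ici)
      (fun _ ht ↦ h.hasDerivAt ht) (h.integrableOn_Ioi_deriv hlam hg) (h.tendsto_zero hlam hg)
  rw [h.map_zero, sub_zero, MeasureTheory.integral_smul,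
    MeasureTheory.integral_add (h.integrableOn_Ioi hlam hg) hg] at hderiv
  exact eq_neg_of_add_eq_zero_left
    ((smul_eq_zero.1 hderiv).resolve_left (neg_ne_zero.2 (inv_ne_zero hlam.ne')))

end IsRelaxation

theorem stmt_15_general {E F : Type*} [NormedAddCommGroup E] [NormedSpace ℝ E] [CompleteSpace E]
    [NormedAddCommGroup F] [NormedSpace ℝ F] {lam : ℝ} (hlam : 0 < lam) {g f f' : ℝ → E}
    (hf' : ∀ t, 0 ≤ t → HasDerivWithinAt f (f' t) (Set.Ici 0) t) (hf0 : f 0 = 0)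
    (hode : ∀ t, 0 ≤ t → lam • f' t + f t + g t = 0) :
    (∀ C : ℝ, (∀ t, 0 ≤ t → ‖g t‖ ≤ C) → ∀ t, 0 ≤ t → ‖f t‖ ≤ C) ∧
      (IntegrableOn g (Set.Ioi 0) →
        (∀ L : E →L[ℝ] F, IntegrableOn (fun t ↦ L (f t)) (Set.Ioi 0) ∧
            (∀ t, 0 ≤ t → ∫ s in 0..t, ‖L (f s)‖ ≤ ∫ s in 0..t, ‖L (g s)‖) ∧
            ∫ t in Set.Ioi 0, ‖L (f t)‖ ≤ ∫ t in Set.Ioi 0, ‖L (g t)‖) ∧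
          Tendsto f atTop (nhds 0) ∧
          ∫ t in Set.Ioi 0, f t = -∫ t in Set.Ioi 0, g t) := by
  have h : IsRelaxation lam g f := .of_smul_deriv_add hlam.ne' hf' hf0 hode
  refine ⟨fun C hC t ht ↦ h.norm_le_of_forall_norm_le hlam hC ht, fun hg ↦
    ⟨fun L ↦ ?_, h.tendsto_zero hlam hg, h.integral_Ioi_eq_neg hlam hg⟩⟩
  have hL := h.clm_comp L
  have hLg : IntegrableOn (fun t ↦ L (g t)) (Set.Ioi 0) := L.integrable_comp hg
  exact ⟨hL.integrableOn_Ioi hlam hLg,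
    fun t ht ↦ hL.intervalIntegral_norm_le hlam ht (hLg.mono_set Set.Ioc_subset_Ioi_self),
    hL.integral_Ioi_norm_le hlam hLg⟩

/-- Let `λ > 0`, `g` continuous, `f` differentiable with `f(0) = 0` and
`λḟ + f + g = 0` on `t ≥ 0`. Then: (i) if `g` is bounded then so is `f`, with
`sup ‖f‖ ≤ sup ‖g‖`; and if each coordinate of `g` is absolutely integrable on `(0, ∞)` then
(ii) each coordinate of `f` is integrable with `∫₀^t |f_i| ≤ ∫₀^t |g_i|` for every
`t ∈ [0, ∞]`, (iii) `f(t) → 0` as `t → ∞`, and (iv) `∫₀^∞ f = −∫₀^∞ g`. -/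
theorem stmt_15 {d : ℕ} (lam : ℝ) (hlam : 0 < lam)
    (g : ℝ → EuclideanSpace ℝ (Fin d)) (hg : Continuous g)
    (f f' : ℝ → EuclideanSpace ℝ (Fin d)) (hf' : ∀ t, HasDerivAt f (f' t) t)
    (hf0 : f 0 = 0)
    (hode : ∀ t, 0 ≤ t → lam • f' t + f t + g t = 0) :
    -- (i) boundedness transfer with the same bound
    (∀ C : ℝ, (∀ t, 0 ≤ t → ‖g t‖ ≤ C) → ∀ t, 0 ≤ t → ‖f t‖ ≤ C) ∧
      ((∀ i, IntegrableOn (fun t => g t i) (Set.Ioi (0 : ℝ))) →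
        -- (ii) coordinatewise L¹ bounds, for every finite t and for t = ∞
        (∀ i, IntegrableOn (fun t => f t i) (Set.Ioi (0 : ℝ)) ∧
            (∀ t, 0 ≤ t →
              (∫ s in (0 : ℝ)..t, |f s i|) ≤ ∫ s in (0 : ℝ)..t, |g s i|) ∧
            (∫ t in Set.Ioi (0 : ℝ), |f t i|) ≤ ∫ t in Set.Ioi (0 : ℝ), |g t i|) ∧
          -- (iii) f vanishes at infinity
          Tendsto f atTop (nhds (0 : EuclideanSpace ℝ (Fin d))) ∧
          -- (iv) the integrals of f and g over (0, ∞) are opposite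
          (∫ t in Set.Ioi (0 : ℝ), f t) = -∫ t in Set.Ioi (0 : ℝ), g t) := by
  have h := stmt_15_general (F := ℝ) hlam (fun t _ ↦ (hf' t).hasDerivWithinAt) hf0 hode
  exact ⟨h.1, fun hgi ↦ (h.2 (Integrable.of_eval_piLp hgi)).imp_left fun hL i ↦
    hL (EuclideanSpace.proj i)⟩
end

section
/- Consider full-batch momentum gradient descent on the 2-layer diagonal linear network with step size γ > 0 and momentum β ∈ [0,1), and assume every coordinate of every iterate w_{±,k} is nonzero. For m ≥ 1, define Q_{±,m} = r(w_{±,m+1}/w_{±,m}) + β·r(w_{±,m−1}/w_{±,m}) coordinatewise (with w_{±,1} = w_{±,0}). Then for every N ≥ 1, coordinatewise: |w_{±,N+1}| = |w_{±,0}| ⊙ exp( −(1/(1−β)) Σ_{m=1}^N (1 − β^{N+1−m})·Q_{±,m} ) ⊙ exp( ∓(γ/(1−β)) Σ_{m=1}^N (1 − β^{N+1−m})·∇L(θ_m) ). -/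
open Real Finset

open scoped RealInnerProductSpace

/-- `r(z) = (z − 1) − ln|z|` for `z ≠ 0`. -/
noncomputable def rfun (z : ℝ) : ℝ := (z - 1) - Real.log |z|

/-!
Let `w` be a coordinate of `w_±`. Dividing its recursion by `w_m` expresses a linear combination of
`w_{m+1} / w_m - 1` and `w_{m-1} / w_m - 1` through the gradient. Replacing `z - 1` by
`log |z| + r(z)` turns this into the linear recurrence
`l_{m+1} - l_m = β (l_m - l_{m-1}) - Q_m ∓ γ g_m` for `l_m = log |w_m|`, where `g_m` is the
gradient coordinate. Its characteristic roots are `1` and `β`, so both `l_{m+1} - l_m` and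
`l_{m+1} - β l_m` satisfy first-order recurrences. Eliminating `l_N` between the two solutions
gives the weights `1 - β^{N+1-m}`.
-/

section LinearRecurrence

variable {R : Type*} [CommRing R] {β : R} {b : ℕ → R}

theorem firstOrder_recurrence_eq_sum {x : ℕ → R} (hx : ∀ k, x (k + 1) = β * x k + b (k + 1))
    (N : ℕ) : x N = β ^ N * x 0 + ∑ m ∈ Icc 1 N, β ^ (N - m) * b m := by
  induction N with
  | zero => simp
  | succ N ih =>
    have shift_weights : ∑ m ∈ Icc 1 N, β ^ (N + 1 - m) * b m =
        β * ∑ m ∈ Icc 1 N, β ^ (N - m) * b m := by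
      rw [mul_sum]
      refine sum_congr rfl fun m hm => ?_
      rw [Nat.sub_add_comm (mem_Icc.mp hm).2, pow_succ', mul_assoc]
    rw [hx, ih, sum_Icc_succ_top (Nat.le_add_left 1 N), shift_weights, Nat.sub_self]
    ring

theorem momentum_recurrence_eq_sum {l : ℕ → R}
    (hl : ∀ k, l (k + 2) = l (k + 1) + β * (l (k + 1) - l k) + b (k + 1)) (N : ℕ) :
    (1 - β) * (l (N + 1) - l 0) =
      (1 - β ^ (N + 1)) * (l 1 - l 0) + ∑ m ∈ Icc 1 N, (1 - β ^ (N + 1 - m)) * b m := by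
  have increment : l (N + 1) - l N =
      β ^ N * (l 1 - l 0) + ∑ m ∈ Icc 1 N, β ^ (N - m) * b m :=
    firstOrder_recurrence_eq_sum (x := fun k => l (k + 1) - l k)
      (fun k => by linear_combination hl k) N
  have telescoped : l (N + 1) - β * l N = l 1 - β * l 0 + ∑ m ∈ Icc 1 N, b m := by
    simpa only [one_pow, one_mul, zero_add] using
      firstOrder_recurrence_eq_sum (β := 1) (x := fun k => l (k + 1) - β * l k)
        (fun k => by linear_combination hl k) N
  have split_weights : ∑ m ∈ Icc 1 N, (1 - β ^ (N + 1 - m)) * b m =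
      ∑ m ∈ Icc 1 N, b m - β * ∑ m ∈ Icc 1 N, β ^ (N - m) * b m := by
    rw [mul_sum, ← sum_sub_distrib]
    refine sum_congr rfl fun m hm => ?_
    rw [Nat.sub_add_comm (mem_Icc.mp hm).2]
    ring
  rw [split_weights]
  linear_combination telescoped - β * increment

end LinearRecurrence

/-- The quantity `Q_m = r(w_{m+1} / w_m) + β r(w_{m-1} / w_m)` attached to a scalar trajectory `w`:
the error made in the momentum recursion by replacing relative increments of `w` with increments of
`log |w|`. It is meaningful for `m ≥ 1`; at `m = 0` the truncated index makes `w_{m-1} = w_0`. -/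
noncomputable def logRemainder (β : ℝ) (w : ℕ → ℝ) (m : ℕ) : ℝ :=
  rfun (w (m + 1) / w m) + β * rfun (w (m - 1) / w m)

theorem rfun_div {a b : ℝ} (ha : a ≠ 0) (hb : b ≠ 0) :
    rfun (a / b) = a / b - 1 - (log a - log b) := by
  rw [rfun, log_abs, log_div ha hb]

section MultiplicativeMomentum

variable {β γ : ℝ} {g w : ℕ → ℝ}

theorem log_momentum_recurrence (hw : ∀ k, w k ≠ 0)
    (hrec : ∀ k, w (k + 2) = w (k + 1) - γ * (g (k + 1) * w (k + 1)) + β * (w (k + 1) - w k))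
    (k : ℕ) :
    log (w (k + 2)) = log (w (k + 1)) + β * (log (w (k + 1)) - log (w k)) +
      -(logRemainder β w (k + 1) + γ * g (k + 1)) := by
  have relative_increments :
      (w (k + 2) / w (k + 1) - 1) + β * (w k / w (k + 1) - 1) = -(γ * g (k + 1)) := by
    have := hw (k + 1)
    field_simp
    linear_combination hrec k
  have remainder : logRemainder β w (k + 1) =
      w (k + 2) / w (k + 1) - 1 - (log (w (k + 2)) - log (w (k + 1))) +
        β * (w k / w (k + 1) - 1 - (log (w k) - log (w (k + 1)))) := by
    rw [logRemainder, Nat.add_sub_cancel, rfun_div (hw _) (hw _), rfun_div (hw _) (hw _)]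
  linear_combination remainder + relative_increments

theorem abs_momentum_eq_mul_exp (hβ : β ≠ 1) (hw : ∀ k, w k ≠ 0) (hinit : w 1 = w 0)
    (hrec : ∀ k, w (k + 2) = w (k + 1) - γ * (g (k + 1) * w (k + 1)) + β * (w (k + 1) - w k))
    (N : ℕ) :
    |w (N + 1)| = |w 0| *
      exp (-(1 / (1 - β)) * ∑ m ∈ Icc 1 N, (1 - β ^ (N + 1 - m)) * logRemainder β w m) *
      exp (-(γ / (1 - β)) * ∑ m ∈ Icc 1 N, (1 - β ^ (N + 1 - m)) * g m) := by
  have hβ' : 1 - β ≠ 0 := sub_ne_zero.mpr hβ.symm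
  have log_growth : (1 - β) * (log (w (N + 1)) - log (w 0)) =
      -(∑ m ∈ Icc 1 N, (1 - β ^ (N + 1 - m)) * logRemainder β w m +
        γ * ∑ m ∈ Icc 1 N, (1 - β ^ (N + 1 - m)) * g m) := by
    have h := momentum_recurrence_eq_sum (l := fun k => log (w k))
      (b := fun m => -(logRemainder β w m + γ * g m)) (log_momentum_recurrence hw hrec) N
    simpa only [hinit, sub_self, mul_zero, zero_add, mul_neg, sum_neg_distrib, mul_add,
      sum_add_distrib, mul_sum, mul_left_comm γ] using h
  rw [← exp_log_eq_abs (hw (N + 1)), ← exp_log_eq_abs (hw 0), ← exp_add, ← exp_add]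
  congr 1
  field_simp
  linear_combination log_growth

end MultiplicativeMomentum

theorem stmt_16_general {ι : Type*} {β γ : ℝ} (hβ : β ≠ 1) {u v g : ℕ → ι → ℝ}
    (h1u : u 1 = u 0) (h1v : v 1 = v 0)
    (hrecu : ∀ k i, u (k + 2) i =
      u (k + 1) i - γ * (g (k + 1) i * v (k + 1) i) + β * (u (k + 1) i - u k i))
    (hrecv : ∀ k i, v (k + 2) i =
      v (k + 1) i - γ * (g (k + 1) i * u (k + 1) i) + β * (v (k + 1) i - v k i))
    (hnz : ∀ k i, u k i + v k i ≠ 0 ∧ u k i - v k i ≠ 0) (N : ℕ) (i : ι) :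
    (|u (N + 1) i + v (N + 1) i| = |u 0 i + v 0 i| *
        exp (-(1 / (1 - β)) * ∑ m ∈ Icc 1 N,
          (1 - β ^ (N + 1 - m)) * logRemainder β (fun k => u k i + v k i) m) *
        exp (-(γ / (1 - β)) * ∑ m ∈ Icc 1 N, (1 - β ^ (N + 1 - m)) * g m i)) ∧
      (|u (N + 1) i - v (N + 1) i| = |u 0 i - v 0 i| *
        exp (-(1 / (1 - β)) * ∑ m ∈ Icc 1 N,
          (1 - β ^ (N + 1 - m)) * logRemainder β (fun k => u k i - v k i) m) *
        exp ((γ / (1 - β)) * ∑ m ∈ Icc 1 N, (1 - β ^ (N + 1 - m)) * g m i)) := by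
  constructor
  · exact abs_momentum_eq_mul_exp (w := fun k => u k i + v k i) (g := fun k => g k i) hβ
      (fun k => (hnz k i).1) (by simp only [h1u, h1v])
      (fun k => by linear_combination hrecu k i + hrecv k i) N
  · have h := abs_momentum_eq_mul_exp (w := fun k => u k i - v k i) (g := fun k => g k i) (γ := -γ)
      hβ (fun k => (hnz k i).2) (by simp only [h1u, h1v])
      (fun k => by linear_combination hrecu k i - hrecv k i) N
    rwa [neg_div, neg_neg] at h

/-- For full-batch MGD on the 2-layer diagonal linear network with all
coordinates of all iterates `w_{±,k}` nonzero, with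
`Q_{±,m} = r(w_{±,m+1}/w_{±,m}) + β·r(w_{±,m−1}/w_{±,m})`, for every `N ≥ 1`,
`|w_{±,N+1}| = |w_{±,0}| ⊙ exp(−(1/(1−β)) ∑_{m=1}^N (1−β^{N+1−m})Q_{±,m})
⊙ exp(∓(γ/(1−β)) ∑_{m=1}^N (1−β^{N+1−m})∇L(θ_m))`. -/
theorem stmt_16 {n d : ℕ}
    (x : Fin n → EuclideanSpace ℝ (Fin d)) (y : Fin n → ℝ)
    (L : EuclideanSpace ℝ (Fin d) → ℝ)
    (hL : L = fun θ => (1 / (2 * (n : ℝ))) * ∑ i, (y i - ⟪x i, θ⟫) ^ 2)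
    (γ β : ℝ) (hγ : 0 < γ) (hβ0 : 0 ≤ β) (hβ1 : β < 1)
    (u v : ℕ → EuclideanSpace ℝ (Fin d))
    (θ : ℕ → EuclideanSpace ℝ (Fin d)) (hθ : ∀ k i, θ k i = u k i * v k i)
    (h1u : u 1 = u 0) (h1v : v 1 = v 0)
    (hrecu : ∀ k, 1 ≤ k → ∀ i,
      u (k + 1) i = u k i - γ * (gradient L (θ k) i * v k i) + β * (u k i - u (k - 1) i))
    (hrecv : ∀ k, 1 ≤ k → ∀ i,
      v (k + 1) i = v k i - γ * (gradient L (θ k) i * u k i) + β * (v k i - v (k - 1) i))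
    -- every coordinate of every iterate w_{±,k} is nonzero
    (hnz : ∀ k i, u k i + v k i ≠ 0 ∧ u k i - v k i ≠ 0)
    -- the quantities Q_{±,m}
    (Qp Qm : ℕ → Fin d → ℝ)
    (hQp : ∀ m i, Qp m i =
      rfun ((u (m + 1) i + v (m + 1) i) / (u m i + v m i)) +
        β * rfun ((u (m - 1) i + v (m - 1) i) / (u m i + v m i)))
    (hQm : ∀ m i, Qm m i =
      rfun ((u (m + 1) i - v (m + 1) i) / (u m i - v m i)) +
        β * rfun ((u (m - 1) i - v (m - 1) i) / (u m i - v m i))) :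
    ∀ N, 1 ≤ N → ∀ i,
      (|u (N + 1) i + v (N + 1) i| =
          |u 0 i + v 0 i| *
            Real.exp (-(1 / (1 - β)) *
              ∑ m ∈ Finset.Icc 1 N, (1 - β ^ (N + 1 - m)) * Qp m i) *
            Real.exp (-(γ / (1 - β)) *
              ∑ m ∈ Finset.Icc 1 N, (1 - β ^ (N + 1 - m)) * gradient L (θ m) i)) ∧
        (|u (N + 1) i - v (N + 1) i| =
          |u 0 i - v 0 i| *
            Real.exp (-(1 / (1 - β)) *
              ∑ m ∈ Finset.Icc 1 N, (1 - β ^ (N + 1 - m)) * Qm m i) *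
            Real.exp ((γ / (1 - β)) *
              ∑ m ∈ Finset.Icc 1 N, (1 - β ^ (N + 1 - m)) * gradient L (θ m) i)) := by
  simp only [hQp, hQm]
  exact fun N _ => stmt_16_general hβ1.ne (congrArg WithLp.ofLp h1u) (congrArg WithLp.ofLp h1v)
    (fun k => hrecu (k + 1) le_add_self) (fun k => hrecv (k + 1) le_add_self) hnz N
end

section
/- Consider full-batch momentum gradient descent on the 2-layer diagonal linear network with step size γ > 0 and momentum β ∈ [0,1). Assume every coordinate of every iterate w_{±,k} is nonzero, that (u_k, v_k) converges to (u_∞, v_∞) as k → ∞, and that Δ_∞ = |u_∞² − v_∞²| has strictly positive coordinates. Then the series S_± := (1/(1−β)) Σ_{k=1}^∞ [ r(w_{±,k+1}/w_{±,k}) + β·r(w_{±,k}/w_{±,k+1}) ] converge coordinatewise to finite vectors in ℝ^d. -/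
open Real Filter Finset

open scoped RealInnerProductSpace

/-!
For fixed `i`, both `w₊` and `w₋` satisfy a momentum recursion
`w (k + 2) = w (k + 1) + c k * w (k + 1) + β * (w (k + 1) - w k)`, with opposite `c`. Dividing by
`w (k + 1)` shows that the `k`-th summand of `S_±` is `± c k` up to a telescoping difference of a
potential, so that `c` cancels in `S₊ + S₋`. Nonzero limits make the potentials converge and force
the ratios of consecutive iterates to `1`; hence the summands are eventually nonnegative, and
convergence of `S₊ + S₋` gives convergence of each series.
-/

open scoped Topology

lemma summable_sub_succ_of_tendsto {F : ℕ → ℝ} {l : ℝ} (hF : Tendsto F atTop (𝓝 l))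
    (hanti : ∀ᶠ k in atTop, 0 ≤ F k - F (k + 1)) : Summable fun k => F k - F (k + 1) := by
  obtain ⟨K, hK⟩ := eventually_atTop.1 hanti
  refine (summable_nat_add_iff K).1 (HasSum.summable (a := F (0 + K) - l) ?_)
  rw [hasSum_iff_tendsto_nat_of_nonneg fun k => hK (k + K) (Nat.le_add_left K k)]
  have htail : Tendsto (fun N => F (0 + K) - F (N + K)) atTop (𝓝 (F (0 + K) - l)) :=
    ((tendsto_add_atTop_iff_nat K).2 hF).const_sub _
  refine htail.congr fun N => ?_
  simpa only [Nat.add_right_comm] using (sum_range_sub' (fun k => F (k + K)) N).symm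

lemma exists_tendsto_mul_sum_Icc_one {f : ℕ → ℝ} (hf : Summable f) (c : ℝ) :
    ∃ S, Tendsto (fun N => c * ∑ k ∈ Icc 1 N, f k) atTop (𝓝 S) := by
  have hshift := ((summable_nat_add_iff 1).2 hf).tendsto_sum_tsum_nat
  refine ⟨_, (hshift.congr fun N => ?_).const_mul c⟩
  rw [range_eq_Ico, sum_Ico_add' f 0 N 1, zero_add, Ico_add_one_right_eq_Icc]

/-- The summand of `S_±` for consecutive values `a`, `b` of `w_±`. For `a`, `b` of equal sign,
`rfun (b / a)` is the Itakura–Saito divergence of `b` from `a`, and the divergence in the other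
direction has weight `β`. -/
noncomputable def momentumDivergence (β a b : ℝ) : ℝ := rfun (b / a) + β * rfun (a / b)

/-- The potential of consecutive values `a`, `b` of a momentum recursion, chosen so that
`momentumDivergence` is the coefficient `c` minus an increment of the potential. `Real.log`
is `log |·|`, so `b` may be negative. -/
noncomputable def momentumPotential (β a b : ℝ) : ℝ := β * ((b - a) / b) + (1 - β) * Real.log b

lemma rfun_nonneg {z : ℝ} (hz : 0 < z) : 0 ≤ rfun z := by
  rw [rfun, abs_of_pos hz, sub_nonneg]
  exact log_le_sub_one_of_pos hz

lemma momentumDivergence_nonneg {β a b : ℝ} (hβ : 0 ≤ β) (hab : 0 < b / a) :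
    0 ≤ momentumDivergence β a b :=
  have hba : 0 < a / b := inv_div b a ▸ inv_pos.2 hab
  add_nonneg (rfun_nonneg hab) (mul_nonneg hβ (rfun_nonneg hba))

lemma momentumDivergence_eq_add_potential_sub {β a b b' c : ℝ} (hb : b ≠ 0) (hb' : b' ≠ 0)
    (hrec : b' = b + c * b + β * (b - a)) :
    momentumDivergence β b b' = c + (momentumPotential β a b - momentumPotential β b b') := by
  have hc : c = (b' - b) / b - β * ((b - a) / b) := by
    rw [hrec]
    field_simp
    ring
  simp only [momentumDivergence, momentumPotential, rfun, Real.log_abs, Real.log_div hb hb',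
    Real.log_div hb' hb, hc]
  field_simp
  ring

section MomentumRecursion

variable {β l m : ℝ} {w z c : ℕ → ℝ}

lemma tendsto_momentumPotential (β : ℝ) (hw : Tendsto w atTop (𝓝 l)) (hl : l ≠ 0) :
    Tendsto (fun k => momentumPotential β (w k) (w (k + 1))) atTop
      (𝓝 (momentumPotential β l l)) := by
  have hw' : Tendsto (fun k => w (k + 1)) atTop (𝓝 l) := (tendsto_add_atTop_iff_nat 1).2 hw
  exact (((hw'.sub hw).div hw' hl).const_mul β).add ((hw'.log hl).const_mul (1 - β))

lemma eventually_momentumDivergence_nonneg (hβ : 0 ≤ β) (hw : Tendsto w atTop (𝓝 l))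
    (hl : l ≠ 0) : ∀ᶠ k in atTop, 0 ≤ momentumDivergence β (w k) (w (k + 1)) := by
  have hratio : Tendsto (fun k => w (k + 1) / w k) atTop (𝓝 1) :=
    div_self hl ▸ ((tendsto_add_atTop_iff_nat 1).2 hw).div hw hl
  exact (hratio.eventually_const_lt one_pos).mono fun _ => momentumDivergence_nonneg hβ

lemma eventually_momentumDivergence_eq (hw : Tendsto w atTop (𝓝 l)) (hl : l ≠ 0)
    (hrec : ∀ k, w (k + 2) = w (k + 1) + c k * w (k + 1) + β * (w (k + 1) - w k)) :
    ∀ᶠ k in atTop, momentumDivergence β (w (k + 1)) (w (k + 2)) =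
      c k + (momentumPotential β (w k) (w (k + 1)) -
        momentumPotential β (w (k + 1)) (w (k + 2))) := by
  have hne : ∀ n, ∀ᶠ k in atTop, w (k + n) ≠ 0 := fun n =>
    ((tendsto_add_atTop_iff_nat n).2 hw).eventually_ne hl
  filter_upwards [hne 1, hne 2] with k h₁ h₂
  exact momentumDivergence_eq_add_potential_sub h₁ h₂ (hrec k)

theorem summable_momentumDivergence_of_opposite (hβ : 0 ≤ β)
    (hwrec : ∀ k, w (k + 2) = w (k + 1) + c k * w (k + 1) + β * (w (k + 1) - w k))
    (hzrec : ∀ k, z (k + 2) = z (k + 1) + -c k * z (k + 1) + β * (z (k + 1) - z k))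
    (hw : Tendsto w atTop (𝓝 l)) (hl : l ≠ 0) (hz : Tendsto z atTop (𝓝 m)) (hm : m ≠ 0) :
    Summable fun k => momentumDivergence β (w k) (w (k + 1)) := by
  let F k := momentumPotential β (w k) (w (k + 1)) + momentumPotential β (z k) (z (k + 1))
  have hF : Tendsto F atTop (𝓝 (momentumPotential β l l + momentumPotential β m m)) :=
    (tendsto_momentumPotential β hw hl).add (tendsto_momentumPotential β hz hm)
  have hsum : ∀ᶠ k in atTop, momentumDivergence β (w (k + 1)) (w (k + 2)) +
      momentumDivergence β (z (k + 1)) (z (k + 2)) = F k - F (k + 1) := by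
    filter_upwards [eventually_momentumDivergence_eq hw hl hwrec,
      eventually_momentumDivergence_eq hz hm hzrec] with k hwk hzk
    rw [hwk, hzk]
    ring
  have hw_nonneg : ∀ᶠ k in atTop, 0 ≤ momentumDivergence β (w (k + 1)) (w (k + 2)) :=
    (tendsto_add_atTop_nat 1).eventually (eventually_momentumDivergence_nonneg hβ hw hl)
  have hz_nonneg : ∀ᶠ k in atTop, 0 ≤ momentumDivergence β (z (k + 1)) (z (k + 2)) :=
    (tendsto_add_atTop_nat 1).eventually (eventually_momentumDivergence_nonneg hβ hz hm)
  have hF_summable : Summable fun k => F k - F (k + 1) := by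
    refine summable_sub_succ_of_tendsto hF ?_
    filter_upwards [hsum, hw_nonneg, hz_nonneg] with k hk hwk hzk
    exact hk ▸ add_nonneg hwk hzk
  refine (summable_nat_add_iff 1).1 (hF_summable.of_norm_bounded_eventually_nat ?_)
  filter_upwards [hsum, hw_nonneg, hz_nonneg] with k hk hwk hzk
  rw [Real.norm_of_nonneg hwk, ← hk]
  exact le_add_of_nonneg_right hzk

end MomentumRecursion

-- A zero value of `w_±` turns the adjacent summands into junk (`x / 0 = 0`); the limits being
-- nonzero, this affects only finitely many of them, hence not the summability.
theorem stmt_17_general {ι : Type*} {γ β : ℝ} (hβ : 0 ≤ β)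
    {g u v : ℕ → EuclideanSpace ℝ ι} {ulim vlim : EuclideanSpace ℝ ι}
    (hrecu : ∀ k, 1 ≤ k → ∀ i,
      u (k + 1) i = u k i - γ * (g k i * v k i) + β * (u k i - u (k - 1) i))
    (hrecv : ∀ k, 1 ≤ k → ∀ i,
      v (k + 1) i = v k i - γ * (g k i * u k i) + β * (v k i - v (k - 1) i))
    (hu : Tendsto u atTop (𝓝 ulim)) (hv : Tendsto v atTop (𝓝 vlim))
    (hlim : ∀ i, ulim i ^ 2 ≠ vlim i ^ 2) (i : ι) :
    (Summable fun k => momentumDivergence β (u k i + v k i) (u (k + 1) i + v (k + 1) i)) ∧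
      Summable fun k => momentumDivergence β (u k i - v k i) (u (k + 1) i - v (k + 1) i) := by
  have hui : Tendsto (fun k => u k i) atTop (𝓝 (ulim i)) :=
    ((EuclideanSpace.proj (𝕜 := ℝ) i).continuous.tendsto ulim).comp hu
  have hvi : Tendsto (fun k => v k i) atTop (𝓝 (vlim i)) :=
    ((EuclideanSpace.proj (𝕜 := ℝ) i).continuous.tendsto vlim).comp hv
  obtain ⟨hadd, hsub⟩ : ulim i + vlim i ≠ 0 ∧ ulim i - vlim i ≠ 0 :=
    mul_ne_zero_iff.1 (sq_sub_sq (ulim i) (vlim i) ▸ sub_ne_zero.2 (hlim i))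
  have hu_succ (k : ℕ) := hrecu (k + 1) (Nat.le_add_left 1 k) i
  have hv_succ (k : ℕ) := hrecv (k + 1) (Nat.le_add_left 1 k) i
  simp only [add_assoc, Nat.reduceAdd, Nat.add_sub_cancel] at hu_succ hv_succ
  constructor
  · refine summable_momentumDivergence_of_opposite (c := fun k => -(γ * g (k + 1) i)) hβ
      (fun k => ?_) (fun k => ?_) (hui.add hvi) hadd (hui.sub hvi) hsub <;>
    · rw [hu_succ, hv_succ]
      ring
  · refine summable_momentumDivergence_of_opposite (c := fun k => γ * g (k + 1) i) hβ
      (fun k => ?_) (fun k => ?_) (hui.sub hvi) hsub (hui.add hvi) hadd <;>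
    · rw [hu_succ, hv_succ]
      ring

/-- For full-batch MGD on the 2-layer diagonal linear network, if every
coordinate of every iterate `w_{±,k}` is nonzero, `(u_k, v_k)` converges, and the asymptotic
balancedness has strictly positive coordinates, then the series
`S_± = (1/(1−β)) ∑_{k=1}^∞ [r(w_{±,k+1}/w_{±,k}) + β·r(w_{±,k}/w_{±,k+1})]`
converge coordinatewise to finite values. -/
theorem stmt_17 {n d : ℕ}
    (x : Fin n → EuclideanSpace ℝ (Fin d)) (y : Fin n → ℝ)
    (L : EuclideanSpace ℝ (Fin d) → ℝ)
    (hL : L = fun θ => (1 / (2 * (n : ℝ))) * ∑ i, (y i - ⟪x i, θ⟫) ^ 2)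
    (γ β : ℝ) (hγ : 0 < γ) (hβ0 : 0 ≤ β) (hβ1 : β < 1)
    (u v : ℕ → EuclideanSpace ℝ (Fin d))
    (θ : ℕ → EuclideanSpace ℝ (Fin d)) (hθ : ∀ k i, θ k i = u k i * v k i)
    (h1u : u 1 = u 0) (h1v : v 1 = v 0)
    (hrecu : ∀ k, 1 ≤ k → ∀ i,
      u (k + 1) i = u k i - γ * (gradient L (θ k) i * v k i) + β * (u k i - u (k - 1) i))
    (hrecv : ∀ k, 1 ≤ k → ∀ i,
      v (k + 1) i = v k i - γ * (gradient L (θ k) i * u k i) + β * (v k i - v (k - 1) i))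
    (hnz : ∀ k i, u k i + v k i ≠ 0 ∧ u k i - v k i ≠ 0)
    (ulim vlim : EuclideanSpace ℝ (Fin d))
    (hu : Tendsto u atTop (nhds ulim)) (hv : Tendsto v atTop (nhds vlim))
    (hDinf : ∀ i, 0 < |ulim i ^ 2 - vlim i ^ 2|) :
    ∀ i,
      (∃ Sp : ℝ,
        Tendsto
          (fun N => (1 / (1 - β)) *
            ∑ k ∈ Finset.Icc 1 N,
              (rfun ((u (k + 1) i + v (k + 1) i) / (u k i + v k i)) +
                β * rfun ((u k i + v k i) / (u (k + 1) i + v (k + 1) i))))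
          atTop (nhds Sp)) ∧
      (∃ Sm : ℝ,
        Tendsto
          (fun N => (1 / (1 - β)) *
            ∑ k ∈ Finset.Icc 1 N,
              (rfun ((u (k + 1) i - v (k + 1) i) / (u k i - v k i)) +
                β * rfun ((u k i - v k i) / (u (k + 1) i - v (k + 1) i))))
          atTop (nhds Sm)) := by
  have hlim : ∀ i, ulim i ^ 2 ≠ vlim i ^ 2 := fun i => sub_ne_zero.1 (abs_pos.1 (hDinf i))
  exact fun i => (stmt_17_general (g := fun k => gradient L (θ k)) hβ0 hrecu hrecv hu hv hlim i).imp
    (exists_tendsto_mul_sum_Icc_one · _) (exists_tendsto_mul_sum_Icc_one · _)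
end
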